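/- arXiv:1909.01906 — 2 statements merged into one kernel-verified Lean document; each statement's English description precedes it below -/
import Mathlib

section
/- Consider the unital *-subalgebra N = M_n ⊗ ℂ1_m ⊆ M_n ⊗ M_m ≅ M_{nm}. Then for every p ∈ [1/2, ∞]: −log λ(M_n ⊗ M_m : N) = D_p(M_n ⊗ M_m ‖ N) = log(m · min(n,m)), while D_{p,cb}(M_n ⊗ M_m ‖ N) = 2 log m. -/
open scoped ENNReal Classical ComplexOrder
open Matrix

noncomputable section

namespace GJL

variable {n : Type*} [Fintype n] [DecidableEq n]

/-- `Mat n` is the matrix *-algebra with rows and columns indexed by `n`. -/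
abbrev Mat (n : Type*) [Fintype n] [DecidableEq n] := Matrix n n ℂ

/-- A density matrix: positive semidefinite with trace one. -/
def IsDensity (ρ : Mat n) : Prop := ρ.PosSemidef ∧ ρ.trace = 1

/-- The real part of the (matrix) trace. -/
def traceR (A : Mat n) : ℝ := (A.trace).re

/-- Real matrix powers via the continuous functional calculus.  For positive
semidefinite matrices and negative exponents this is the generalized inverse
power on the support, since `(0 : ℝ) ^ r = 0` for `r ≠ 0`. -/
def mpow (A : Mat n) (r : ℝ) : Mat n := cfc (fun x : ℝ => x ^ r) A

/-- Matrix logarithm on the support (`Real.log 0 = 0`). -/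
def mlog (A : Mat n) : Mat n := cfc Real.log A

/-- Schatten `p`-norm `(Tr ((x* x)^(p/2)))^(1/p)`. -/
def snorm (p : ℝ) (x : Mat n) : ℝ := (traceR (mpow (xᴴ * x) (p/2))) ^ (1/p)

/-- Operator norm `‖x‖_∞`. -/
def opNorm (x : Mat n) : ℝ := ‖(Matrix.toEuclideanCLM (𝕜 := ℂ) x : EuclideanSpace ℂ n →L[ℂ] EuclideanSpace ℂ n)‖

/-- The support projection of `ρ` is dominated by that of `σ` (for positive
semidefinite matrices: `ker σ ⊆ ker ρ`). -/
def suppLe (ρ σ : Mat n) : Prop := ∀ v, σ.mulVec v = 0 → ρ.mulVec v = 0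

/-- `e` is the support projection of `ρ`. -/
def IsSupportProj (ρ e : Mat n) : Prop :=
  e.IsHermitian ∧ e * e = e ∧ ∀ v, e.mulVec v = 0 ↔ ρ.mulVec v = 0

/-- `D_∞(ρ‖σ) = log min {λ ≥ 0 | ρ ≤ λ σ}`, `⊤` if no such `λ` exists. -/
def Dinf (ρ σ : Mat n) : EReal :=
  if ∃ c : ℝ, 0 ≤ c ∧ (c • σ - ρ).PosSemidef then
    ((Real.log (sInf {c : ℝ | 0 ≤ c ∧ (c • σ - ρ).PosSemidef}) : ℝ) : EReal)
  else ⊤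

/-- Umegaki relative entropy `D(ρ‖σ) = Tr(ρ log ρ - ρ log σ)`, `⊤` if the
support condition fails. -/
def DU (ρ σ : Mat n) : EReal :=
  if suppLe ρ σ then ((traceR (ρ * mlog ρ - ρ * mlog σ) : ℝ) : EReal) else ⊤

/-- The sandwiched matrix `σ^{(1-p)/(2p)} ρ σ^{(1-p)/(2p)}`; note that for
`p > 1` the exponent `(1-p)/(2p)` equals `-1/(2p')` with `1/p + 1/p' = 1`. -/
def sandwich (p : ℝ) (ρ σ : Mat n) : Mat n :=
  mpow σ ((1 - p)/(2*p)) * ρ * mpow σ ((1 - p)/(2*p))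

/-- The sandwiched Rényi relative entropy `D_p(ρ‖σ)` for `p ∈ [1/2, ∞]`:
for `p ∈ (1,∞)` it is `p' log ‖σ^{-1/(2p')} ρ σ^{-1/(2p')}‖_p
= (p-1)⁻¹ log Tr ((σ^{-1/(2p')} ρ σ^{-1/(2p')})^p)` when the support of `ρ` is
dominated by that of `σ` and `⊤` otherwise; for `p ∈ [1/2, 1)` it is
`(p-1)⁻¹ log Tr ((σ^{(1-p)/(2p)} ρ σ^{(1-p)/(2p)})^p)` (`⊤` when the trace
vanishes, i.e. when the honest value is `+∞`); `D_1` is the Umegaki relative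
entropy and `D_∞` the max-relative entropy. -/
def Dp (p : ℝ≥0∞) (ρ σ : Mat n) : EReal :=
  if p = ⊤ then Dinf ρ σ
  else if p = 1 then DU ρ σ
  else if 1 < p.toReal ∧ ¬ suppLe ρ σ then ⊤
  else if traceR (mpow (sandwich p.toReal ρ σ) p.toReal) = 0 then ⊤
  else (((p.toReal - 1)⁻¹ * Real.log (traceR (mpow (sandwich p.toReal ρ σ) p.toReal)) : ℝ) : EReal)

/-- `D_p(ρ‖S) = inf { D_p(ρ‖σ) | σ a density in S }`. -/
def DpSet (p : ℝ≥0∞) (ρ : Mat n) (S : Set (Mat n)) : EReal :=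
  ⨅ σ ∈ {σ ∈ S | IsDensity σ}, Dp p ρ σ

/-- `D_p(A‖S) = sup { D_p(ρ‖S) | ρ a density in A }`. -/
def DpRel (p : ℝ≥0∞) (A S : Set (Mat n)) : EReal :=
  ⨆ ρ ∈ {ρ ∈ A | IsDensity ρ}, DpSet p ρ S

open scoped Kronecker in
/-- The algebraic tensor product `N₁ ⊗ N₂ ⊆ M_{n₁} ⊗ M_{n₂} = M_{n₁ × n₂}`,
realized as the linear span of Kronecker products. -/
def tensorSpan {n₁ n₂ : Type*} [Fintype n₁] [DecidableEq n₁] [Fintype n₂] [DecidableEq n₂]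
    (N₁ : Set (Mat n₁)) (N₂ : Set (Mat n₂)) : Set (Mat (n₁ × n₂)) :=
  ↑(Submodule.span ℂ {z : Mat (n₁ × n₂) | ∃ x ∈ N₁, ∃ y ∈ N₂, z = x ⊗ₖ y})

/-- `D_{p,cb}(M‖N) = sup_k D_p(M_k ⊗ M ‖ M_k ⊗ N)`. -/
def DpCb (p : ℝ≥0∞) (N : Set (Mat n)) : EReal :=
  ⨆ k : ℕ, DpRel p Set.univ (tensorSpan (Set.univ : Set (Mat (Fin k))) N)

/-- `E` is the trace preserving conditional expectation onto `N`, i.e. the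
orthogonal projection onto `N` with respect to the Hilbert–Schmidt inner
product `⟨x,y⟩ = Tr(x* y)`. -/
def IsCondExp (N : Set (Mat n)) (E : Mat n →ₗ[ℂ] Mat n) : Prop :=
  (∀ x, E x ∈ N) ∧ (∀ x ∈ N, E x = x) ∧
    ∀ x y, y ∈ N → ((E x)ᴴ * y).trace = (xᴴ * y).trace

/-- The Pimsner–Popa index constant
`λ(M:N) = max {c ≥ 0 | c x ≤ E(x) for all x ≥ 0}`. -/
def ppIndex (E : Mat n →ₗ[ℂ] Mat n) : ℝ :=
  sSup {c : ℝ | 0 ≤ c ∧ ∀ x : Mat n, x.PosSemidef → (E x - c • x).PosSemidef}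

/-- von Neumann entropy `H(ρ) = -Tr(ρ log ρ)`. -/
def vnEntropy (ρ : Mat n) : ℝ := - traceR (ρ * mlog ρ)

/-- The amplification `id_{M_k} ⊗ Φ` acting on `M_k ⊗ M_n = M_{k × n}`,
applying `Φ` blockwise. -/
def ampFun (k : Type*) [Fintype k] [DecidableEq k] (Φ : Mat n →ₗ[ℂ] Mat n)
    (X : Mat (k × n)) : Mat (k × n) :=
  Matrix.of fun a b => Φ (Matrix.of fun s t => X (a.1, s) (b.1, t)) a.2 b.2

/-- Complete positivity: all amplifications `id_{M_k} ⊗ Φ` preserve positive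
semidefiniteness. -/
def IsCP (Φ : Mat n →ₗ[ℂ] Mat n) : Prop :=
  ∀ (k : ℕ) (X : Mat (Fin k × n)), X.PosSemidef → (ampFun (Fin k) Φ X).PosSemidef

/-- Completely positive and trace preserving. -/
def IsCPTP (Φ : Mat n →ₗ[ℂ] Mat n) : Prop :=
  IsCP Φ ∧ ∀ x : Mat n, (Φ x).trace = x.trace

/-- Scalar multiples of the identity, `ℂ·1`. -/
def scalarAlg (n : Type*) [Fintype n] [DecidableEq n] : Set (Mat n) :=
  {x : Mat n | ∃ c : ℂ, x = c • (1 : Mat n)}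

section

/-- spectral weight of `v` at the `j`-th eigenvector of `A`. -/
def wt {A : Mat n} (hA : A.IsHermitian) (v : n → ℂ) (j : n) : ℝ :=
  ‖((hA.eigenvectorUnitary : Mat n)ᴴ *ᵥ v) j‖ ^ 2

lemma wt_nonneg {A : Mat n} (hA : A.IsHermitian) (v : n → ℂ) (j : n) : 0 ≤ wt hA v j := by
  unfold wt; positivity

lemma cfc_form {A : Mat n} (hA : A.IsHermitian) (f : ℝ → ℝ) :
    cfc f A = (hA.eigenvectorUnitary : Mat n) * diagonal (fun j => ((f (hA.eigenvalues j) : ℝ) : ℂ))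
      * (hA.eigenvectorUnitary : Mat n)ᴴ := by
  rw [hA.cfc_eq f, IsHermitian.cfc, Unitary.conjStarAlgAut_apply]
  rfl

lemma eu_mul {A : Mat n} (hA : A.IsHermitian) :
    (hA.eigenvectorUnitary : Mat n)ᴴ * (hA.eigenvectorUnitary : Mat n) = 1 :=
  Unitary.coe_star_mul_self hA.eigenvectorUnitary

lemma eu_mul' {A : Mat n} (hA : A.IsHermitian) :
    (hA.eigenvectorUnitary : Mat n) * (hA.eigenvectorUnitary : Mat n)ᴴ = 1 :=
  Unitary.coe_mul_star_self hA.eigenvectorUnitary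

lemma cfc_quad {A : Mat n} (hA : A.IsHermitian) (f : ℝ → ℝ) (v : n → ℂ) :
    star v ⬝ᵥ (cfc f A *ᵥ v) = ((∑ j, f (hA.eigenvalues j) * wt hA v j : ℝ) : ℂ) := by
  rw [cfc_form hA f, ← mulVec_mulVec, ← mulVec_mulVec, dotProduct_mulVec,
    show star v ᵥ* (hA.eigenvectorUnitary : Mat n) =
      star ((hA.eigenvectorUnitary : Mat n)ᴴ *ᵥ v) by
      rw [star_mulVec, conjTranspose_conjTranspose]]
  simp only [dotProduct, mulVec_diagonal, Pi.star_apply]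
  push_cast
  refine Finset.sum_congr rfl fun j _ => ?_
  unfold wt
  push_cast
  rw [← Complex.conj_mul']
  simp only [RCLike.star_def]
  ring

lemma cfc_id_quad {A : Mat n} (hA : A.IsHermitian) (v : n → ℂ) :
    star v ⬝ᵥ (A *ᵥ v) = ((∑ j, hA.eigenvalues j * wt hA v j : ℝ) : ℂ) := by
  have := cfc_quad hA id v
  rwa [cfc_id ℝ A (show IsSelfAdjoint A from hA)] at this

lemma wt_sum {A : Mat n} (hA : A.IsHermitian) (v : n → ℂ) :
    star v ⬝ᵥ v = ((∑ j, wt hA v j : ℝ) : ℂ) := by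
  have := cfc_quad hA (fun _ => 1) v
  rw [cfc_const_one ℝ A (show IsSelfAdjoint A from hA)] at this
  simpa using this

lemma cfc_traceR {A : Mat n} (hA : A.IsHermitian) (f : ℝ → ℝ) :
    traceR (cfc f A) = ∑ j, f (hA.eigenvalues j) := by
  rw [cfc_form hA f, traceR, trace_mul_comm, ← mul_assoc, eu_mul, one_mul, trace_diagonal]
  simp

lemma cfc_mul_form {A : Mat n} (hA : A.IsHermitian) (f g : ℝ → ℝ) :
    cfc f A * cfc g A = cfc (fun x => f x * g x) A := by
  rw [cfc_form hA, cfc_form hA, cfc_form hA]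
  set U := (hA.eigenvectorUnitary : Mat n) with hU
  have : Uᴴ * U = 1 := eu_mul hA
  calc _ = U * diagonal (fun j => ((f (hA.eigenvalues j) : ℝ) : ℂ)) * (Uᴴ * U) *
        diagonal (fun j => ((g (hA.eigenvalues j) : ℝ) : ℂ)) * Uᴴ := by simp only [mul_assoc]
    _ = _ := by
      rw [this, mul_one, mul_assoc U, diagonal_mul_diagonal]
      push_cast; rfl

lemma cfc_herm {A : Mat n} (hA : A.IsHermitian) (f : ℝ → ℝ) : (cfc f A).IsHermitian :=
  cfc_predicate f A

/-- columns of the eigenvector unitary -/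
def ev {A : Mat n} (hA : A.IsHermitian) (j : n) : n → ℂ := fun i => (hA.eigenvectorUnitary : Mat n) i j

lemma ev_unit {A : Mat n} (hA : A.IsHermitian) (j : n) : star (ev hA j) ⬝ᵥ ev hA j = 1 := by
  have := congrFun (congrFun (eu_mul hA) j) j
  simpa [mul_apply, dotProduct, ev] using this

lemma ev_quad {A : Mat n} (hA : A.IsHermitian) (M : Mat n) (j : n) :
    star (ev hA j) ⬝ᵥ (M *ᵥ ev hA j) =
     ((hA.eigenvectorUnitary : Mat n)ᴴ * M * (hA.eigenvectorUnitary : Mat n)) j j := by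
  rw [mul_assoc, mul_apply]
  rfl

lemma ev_trace {A : Mat n} (hA : A.IsHermitian) (M : Mat n) :
    ∑ j, star (ev hA j) ⬝ᵥ (M *ᵥ ev hA j) = M.trace := by
  simp only [ev_quad]
  change trace _ = _
  rw [mul_assoc, trace_mul_comm, mul_assoc, eu_mul', mul_one]

lemma ev_trace_mul {A : Mat n} (hA : A.IsHermitian) (M : Mat n) :
    (A * M).trace = ∑ j, (hA.eigenvalues j : ℂ) * (star (ev hA j) ⬝ᵥ (M *ᵥ ev hA j)) := by
  have h := cfc_form hA id
  rw [cfc_id ℝ A (show IsSelfAdjoint A from hA)] at h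
  conv_lhs => rw [h]
  rw [mul_assoc, mul_assoc, trace_mul_comm]
  simp only [ev_quad]
  rw [mul_assoc]
  simp only [trace, diag, diagonal_mul, id, mul_assoc]

lemma ev_eig {A : Mat n} (hA : A.IsHermitian) (j : n) :
    A *ᵥ ev hA j = (hA.eigenvalues j : ℂ) • ev hA j :=
  hA.mulVec_eigenvectorBasis j

lemma ev_wt {A : Mat n} (hA : A.IsHermitian) (v : n → ℂ) (j : n) :
    wt hA v j = ‖star (ev hA j) ⬝ᵥ v‖ ^ 2 := rfl

end

section

lemma jensen_log {ι : Type*} [Fintype ι] (w s : ι → ℝ) (hw : ∀ k, 0 ≤ w k) (h1 : ∑ k, w k = 1)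
    (hs : ∀ k, w k ≠ 0 → 0 < s k) :
    ∑ k, w k * Real.log (s k) ≤ Real.log (∑ k, w k * s k) := by
  have h := strictConcaveOn_log_Ioi.concaveOn.le_map_sum (t := Finset.univ) (w := w)
    (p := fun k => if w k = 0 then 1 else s k) (fun i _ => hw i) h1 (by
      intro i _
      by_cases h : w i = 0
      · simp [h]
      · simpa [h] using hs i h)
  simp only [smul_eq_mul] at h
  have e1 : ∀ k, w k * Real.log (if w k = 0 then 1 else s k) = w k * Real.log (s k) := fun k => by
    by_cases h : w k = 0 <;> simp [h]
  have e2 : ∀ k, (w k * if w k = 0 then 1 else s k) = w k * s k := fun k => by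
    by_cases h : w k = 0 <;> simp [h]
  simpa only [e1, e2] using h

lemma log_mean_pos {ι : Type*} [Fintype ι] (w s : ι → ℝ) (hw : ∀ k, 0 ≤ w k) (h1 : ∑ k, w k = 1)
    (hs : ∀ k, w k ≠ 0 → 0 < s k) : 0 < ∑ k, w k * s k := by
  have h0 : ∀ k, 0 ≤ w k * s k := fun k => by
    by_cases h : w k = 0
    · simp [h]
    · exact mul_nonneg (hw k) (hs k h).le
  refine lt_of_le_of_ne (Finset.sum_nonneg fun k _ => h0 k) fun h => ?_
  have := (Finset.sum_eq_zero_iff_of_nonneg fun k _ => h0 k).1 h.symm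
  have h2 : ∀ k, w k = 0 := fun k => by
    by_contra hk
    have := this k (Finset.mem_univ _)
    have := mul_pos (lt_of_le_of_ne (hw k) (Ne.symm hk)) (hs k hk)
    linarith
  simp [h2] at h1

lemma jensen_pow {ι : Type*} [Fintype ι] (q x : ι → ℝ) (hq : ∀ k, 0 ≤ q k) (hx : ∀ k, 0 ≤ x k)
    (hQ : 0 < ∑ k, q k) (p : ℝ) (hp : 1 ≤ p) :
    (∑ k, q k * x k) ^ p ≤ (∑ k, q k) ^ (p - 1) * ∑ k, q k * x k ^ p := by
  set Q := ∑ k, q k with hQd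
  have h := Real.rpow_arith_mean_le_arith_mean_rpow Finset.univ (fun k => q k / Q) x
    (fun k _ => div_nonneg (hq k) hQ.le) (by rw [← Finset.sum_div]; exact div_self hQ.ne')
    (fun k _ => hx k) hp
  simp only [div_mul_eq_mul_div, ← Finset.sum_div] at h
  rw [Real.div_rpow (Finset.sum_nonneg fun k _ => mul_nonneg (hq k) (hx k)) hQ.le,
    div_le_iff₀ (Real.rpow_pos_of_pos hQ _)] at h
  refine h.trans (le_of_eq ?_)
  rw [Real.rpow_sub_one hQ.ne']
  ring

lemma jensen_pow' {ι : Type*} [Fintype ι] (q x : ι → ℝ) (hq : ∀ k, 0 ≤ q k) (hx : ∀ k, 0 ≤ x k)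
    (hQ : 0 < ∑ k, q k) (p : ℝ) (hp0 : 0 ≤ p) (hp : p ≤ 1) :
    (∑ k, q k) ^ (p - 1) * ∑ k, q k * x k ^ p ≤ (∑ k, q k * x k) ^ p := by
  set Q := ∑ k, q k with hQd
  have h := (Real.concaveOn_rpow hp0 hp).le_map_sum (t := Finset.univ) (w := fun k => q k / Q)
    (p := x)
    (fun k _ => div_nonneg (hq k) hQ.le) (by rw [← Finset.sum_div]; exact div_self hQ.ne')
    (fun k _ => hx k)
  simp only [smul_eq_mul, div_mul_eq_mul_div, ← Finset.sum_div] at h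
  rw [Real.div_rpow (Finset.sum_nonneg fun k _ => mul_nonneg (hq k) (hx k)) hQ.le,
    le_div_iff₀ (Real.rpow_pos_of_pos hQ _)] at h
  refine le_trans (le_of_eq ?_) h
  rw [Real.rpow_sub_one hQ.ne']
  ring

lemma rank_one_trace (g : n → ℂ) (f : ℝ → ℝ) (hf : f 0 = 0) (t : ℝ) (ht : star g ⬝ᵥ g = (t : ℂ)) :
    traceR (cfc f (vecMulVec g (star g))) = f t := by
  set X : Mat n := vecMulVec g (star g) with hX
  have hH : X.IsHermitian := (posSemidef_vecMulVec_self_star g).1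
  have hXX : X * X = (t : ℂ) • X := by
    rw [hX, vecMulVec_mul_vecMulVec, ht]
    ext i j; simp [vecMulVec_apply]; ring
  have hμ : ∀ j, hH.eigenvalues j * hH.eigenvalues j = t * hH.eigenvalues j := by
    intro j
    have h1 := cfc_quad hH (fun x => x * x) (ev hH j)
    have e1 : (star (ev hH j) ⬝ᵥ ((X * X) *ᵥ ev hH j)) =
        (hH.eigenvalues j : ℂ) * hH.eigenvalues j := by
      rw [← mulVec_mulVec, ev_eig, mulVec_smul, ev_eig, dotProduct_smul, dotProduct_smul, ev_unit]
      simp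
    have e2 : (star (ev hH j) ⬝ᵥ ((X * X) *ᵥ ev hH j)) = (t : ℂ) * hH.eigenvalues j := by
      rw [hXX, smul_mulVec, ev_eig, dotProduct_smul, dotProduct_smul, ev_unit]
      simp
    exact_mod_cast e1.symm.trans e2
  have htr : ∑ j, hH.eigenvalues j = t := by
    have h : X.trace = ∑ j, ((hH.eigenvalues j : ℝ) : ℂ) := hH.trace_eq_sum_eigenvalues
    have h' : X.trace = (t : ℂ) := by rw [hX, trace_vecMulVec, dotProduct_comm, ht]
    rw [h'] at h
    exact_mod_cast h.symm
  rw [cfc_traceR hH]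
  by_cases h0 : t = 0
  · have : ∀ j, hH.eigenvalues j = 0 := fun j => by
      have := hμ j; rw [h0] at this; simpa using this
    simp [this, h0, hf]
  · have : ∀ j, f (hH.eigenvalues j) = f t / t * hH.eigenvalues j := fun j => by
      by_cases hj : hH.eigenvalues j = 0
      · simp [hj, hf]
      · rw [mul_right_cancel₀ hj (hμ j)]; field_simp
    simp only [this, ← Finset.mul_sum, htr]
    field_simp

lemma supp_wt (v : n → ℂ) (hv : star v ⬝ᵥ v = 1) {σ : Mat n} (hσ : σ.PosSemidef)
    (h : suppLe (vecMulVec v (star v)) σ) (k : n) (hk : wt hσ.1 v k ≠ 0) :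
    0 < hσ.1.eigenvalues k := by
  refine lt_of_le_of_ne (hσ.eigenvalues_nonneg k) fun h0 => hk ?_
  have h1 := h (ev hσ.1 k) (by rw [ev_eig, ← h0]; simp)
  rw [vecMulVec_mulVec] at h1
  have h2 : star v ⬝ᵥ ev hσ.1 k = 0 := by
    have := congrArg (fun z => star v ⬝ᵥ z) h1
    simpa [dotProduct_smul, hv] using this
  rw [ev_wt]
  have : star (ev hσ.1 k) ⬝ᵥ v = star (star v ⬝ᵥ ev hσ.1 k) := by
    rw [star_dotProduct]
  rw [this, h2]; simp

lemma trace_vv_mul (v : n → ℂ) (M : Mat n) :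
    (vecMulVec v (star v) * M).trace = star v ⬝ᵥ (M *ᵥ v) := by
  rw [trace_mul_comm, mul_vecMulVec, trace_vecMulVec, dotProduct_comm]

end

section

lemma lower_pure (v : n → ℂ) (hv : star v ⬝ᵥ v = 1) {σ : Mat n} (hσ : σ.PosSemidef) {C : ℝ}
    (hC : 0 < C) (h : (star v ⬝ᵥ (σ *ᵥ v)).re ≤ 1 / C) (p : ℝ≥0∞) (hp : 2⁻¹ ≤ p) :
    ((Real.log C : ℝ) : EReal) ≤ Dp p (vecMulVec v (star v)) σ := by
  set w : n → ℝ := wt hσ.1 v with hw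
  set s : n → ℝ := hσ.1.eigenvalues with hs
  have hs0 : ∀ k, 0 ≤ s k := hσ.eigenvalues_nonneg
  have hw0 : ∀ k, 0 ≤ w k := wt_nonneg hσ.1 v
  have hw1 : ∑ k, w k = 1 := by
    have := wt_sum hσ.1 v
    rw [hv] at this; exact_mod_cast this.symm
  have hquad : star v ⬝ᵥ (σ *ᵥ v) = ((∑ k, w k * s k : ℝ) : ℂ) := by
    rw [cfc_id_quad hσ.1 v]; simp only [hw, hs, mul_comm]
  have ha : ∑ k, w k * s k ≤ 1 / C := by rw [hquad] at h; simpa using h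
  have hlogC : Real.log (1 / C) = - Real.log C := by rw [one_div, Real.log_inv]
  have hsupp : suppLe (vecMulVec v (star v)) σ → ∀ k, w k ≠ 0 → 0 < s k :=
    fun h k hk => supp_wt v hv hσ h k hk
  unfold Dp
  split_ifs with h1 h2 h3 h4
  · unfold Dinf
    split_ifs with hex
    · rw [EReal.coe_le_coe_iff]
      refine Real.log_le_log hC (le_csInf hex ?_)
      rintro c ⟨hc0, hc⟩
      have := hc.re_dotProduct_nonneg v
      rw [sub_mulVec, dotProduct_sub, smul_mulVec, dotProduct_smul, vecMulVec_mulVec, hquad] at this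
      simp only [hv, MulOpposite.op_one, one_smul, map_sub, Complex.real_smul] at this
      have h5 : 1 ≤ c * ∑ k, w k * s k := by
        rw [← Complex.ofReal_mul] at this
        have h6 := RCLike.ofReal_re (K := ℂ) (c * ∑ k, w k * s k)
        change (((c * ∑ k, w k * s k : ℝ) : ℂ)).re = _ at h6
        change 0 ≤ (((c * ∑ k, w k * s k : ℝ) : ℂ)).re - 1 at this
        linarith
      have h7 : 1 ≤ c * (1 / C) := h5.trans (mul_le_mul_of_nonneg_left ha hc0)
      rw [mul_one_div, le_div_iff₀ hC] at h7
      linarith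
    · exact le_top
  · unfold DU
    split_ifs with hsl
    · rw [EReal.coe_le_coe_iff]
      have hpos := log_mean_pos w s hw0 hw1 (hsupp hsl)
      have hj := jensen_log w s hw0 hw1 (hsupp hsl)
      have hl := Real.log_le_log hpos ha
      rw [hlogC] at hl
      have e1 : traceR (vecMulVec v (star v) * mlog (vecMulVec v (star v))) = 0 := by
        have hH : (vecMulVec v (star v)).IsHermitian := (posSemidef_vecMulVec_self_star v).1
        have e := cfc_mul_form hH id Real.log
        rw [cfc_id ℝ _ (show IsSelfAdjoint _ from hH)] at e
        unfold mlog
        rw [e, rank_one_trace v _ (by simp) 1 (by simpa using hv)]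
        simp
      have e2 : traceR (vecMulVec v (star v) * mlog σ) = ∑ k, w k * Real.log (s k) := by
        unfold mlog traceR
        rw [trace_vv_mul, cfc_quad hσ.1]
        simp only [Complex.ofReal_re, mul_comm, hw, hs]
      have e3 : traceR (vecMulVec v (star v) * mlog (vecMulVec v (star v)) -
          vecMulVec v (star v) * mlog σ) = 0 - ∑ k, w k * Real.log (s k) := by
        rw [← e1, ← e2]; simp [traceR, trace_sub]
      rw [e3]; linarith
    · exact le_top
  · exact le_top
  · exact le_top
  · rw [EReal.coe_le_coe_iff]
    set P := p.toReal with hP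
    have hP2 : 1 / 2 ≤ P := by
      have := (ENNReal.toReal_le_toReal (by simp) h1).2 hp
      simpa using this
    have hP1 : P ≠ 1 := by
      intro h; apply h2
      rw [← ENNReal.ofReal_toReal h1, ← hP, h]; simp
    have hP0 : 0 < P := by linarith
    set a := (1 - P) / (2 * P) with haa
    set θ := (1 - P) / P with hθ
    have h2a : a + a = θ := by rw [haa, hθ]; field_simp; ring
    have ha0 : a ≠ 0 := by
      rw [haa]; exact div_ne_zero (sub_ne_zero.2 (Ne.symm hP1)) (by positivity)
    have hθ0 : θ ≠ 0 := by
      rw [hθ]; exact div_ne_zero (sub_ne_zero.2 (Ne.symm hP1)) (by positivity)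
    set t := ∑ k, w k * s k ^ θ with ht
    have hg : star (mpow σ a *ᵥ v) ⬝ᵥ (mpow σ a *ᵥ v) = (t : ℂ) := by
      have hH : (mpow σ a)ᴴ = mpow σ a := cfc_herm hσ.1 _
      rw [star_mulVec, hH, ← dotProduct_mulVec, mulVec_mulVec]
      unfold mpow
      rw [cfc_mul_form hσ.1, cfc_quad hσ.1, ht]
      congr 1
      refine Finset.sum_congr rfl fun k _ => ?_
      rw [mul_comm]
      congr 1
      change s k ^ a * s k ^ a = _
      rcases (hs0 k).eq_or_lt with h | h
      · rw [← h, Real.zero_rpow ha0, Real.zero_rpow hθ0, mul_zero]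
      · rw [← Real.rpow_add h, h2a]
    have hsand : sandwich P (vecMulVec v (star v)) σ =
        vecMulVec (mpow σ a *ᵥ v) (star (mpow σ a *ᵥ v)) := by
      have hH : (mpow σ a)ᴴ = mpow σ a := cfc_herm hσ.1 _
      unfold sandwich
      rw [← haa, mul_vecMulVec, vecMulVec_mul, star_mulVec, hH]
    have htr : traceR (mpow (sandwich P (vecMulVec v (star v)) σ) P) = t ^ P := by
      rw [hsand]
      exact rank_one_trace _ (fun x => x ^ P) (Real.zero_rpow hP0.ne') t hg
    rw [htr] at h4 ⊢
    have ht0 : 0 ≤ t := Finset.sum_nonneg fun k _ => mul_nonneg (hw0 k) (Real.rpow_nonneg (hs0 k) _)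
    have htpos : 0 < t := by
      refine lt_of_le_of_ne ht0 fun h => h4 ?_
      rw [← h, Real.zero_rpow hP0.ne']
    rw [Real.log_rpow htpos]
    rcases lt_or_gt_of_ne hP1 with hlt | hgt
    · have hθp : 0 < θ := by rw [hθ]; exact div_pos (by linarith) hP0
      have hθ1 : θ ≤ 1 := by rw [hθ, div_le_one hP0]; linarith
      have hj := jensen_pow' w s hw0 hs0 (by rw [hw1]; norm_num) θ hθp.le hθ1
      rw [hw1, Real.one_rpow, one_mul, ← ht] at hj
      have hm0 : 0 ≤ ∑ k, w k * s k := Finset.sum_nonneg fun k _ => mul_nonneg (hw0 k) (hs0 k)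
      have hj2 := hj.trans (Real.rpow_le_rpow hm0 ha hθp.le)
      have hl := Real.log_le_log htpos hj2
      rw [Real.log_rpow (by positivity), hlogC] at hl
      have hn : (P - 1)⁻¹ * P ≤ 0 :=
        mul_nonpos_of_nonpos_of_nonneg (inv_nonpos.2 (by linarith)) hP0.le
      have := mul_le_mul_of_nonpos_left hl hn
      have e : (P - 1)⁻¹ * P * (θ * - Real.log C) = Real.log C := by
        have : P - 1 ≠ 0 := sub_ne_zero.2 hP1
        rw [hθ]; field_simp; ring
      rw [e, mul_assoc] at this
      exact this
    · have hsl : suppLe (vecMulVec v (star v)) σ := by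
        by_contra hh; exact h3 ⟨hgt, hh⟩
      have hθn : θ < 0 := by rw [hθ]; exact div_neg_of_neg_of_pos (by linarith) hP0
      have hpos := log_mean_pos w s hw0 hw1 (hsupp hsl)
      have hj := jensen_log w s hw0 hw1 (hsupp hsl)
      have hl := Real.log_le_log hpos ha
      rw [hlogC] at hl
      have hj2 := jensen_log w (fun k => s k ^ θ) hw0 hw1
        (fun k hk => Real.rpow_pos_of_pos (hsupp hsl k hk) _)
      have e1 : ∑ k, w k * Real.log (s k ^ θ) = θ * ∑ k, w k * Real.log (s k) := by
        rw [Finset.mul_sum]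
        refine Finset.sum_congr rfl fun k _ => ?_
        by_cases hk : w k = 0
        · simp [hk]
        · rw [Real.log_rpow (hsupp hsl k hk)]; ring
      rw [e1, ← ht] at hj2
      have hl2 : θ * (- Real.log C) ≤ Real.log t :=
        (mul_le_mul_of_nonpos_left (hj.trans hl) hθn.le).trans hj2
      have hn : 0 ≤ (P - 1)⁻¹ * P :=
        mul_nonneg (inv_nonneg.2 (by linarith)) hP0.le
      have := mul_le_mul_of_nonneg_left hl2 hn
      have e : (P - 1)⁻¹ * P * (θ * - Real.log C) = Real.log C := by
        have : P - 1 ≠ 0 := sub_ne_zero.2 hP1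
        rw [hθ]; field_simp; ring
      rw [e, mul_assoc] at this
      exact this

lemma lower_generic (S : Set (Mat n)) (v : n → ℂ) (hv : star v ⬝ᵥ v = 1) {C : ℝ}
    (hC : 0 < C) (h : ∀ σ ∈ S, IsDensity σ → (star v ⬝ᵥ (σ *ᵥ v)).re ≤ 1 / C)
    (p : ℝ≥0∞) (hp : 2⁻¹ ≤ p) :
    ((Real.log C : ℝ) : EReal) ≤ DpRel p Set.univ S := by
  unfold DpRel DpSet
  have hd : IsDensity (vecMulVec v (star v)) :=
    ⟨posSemidef_vecMulVec_self_star v, by rw [trace_vecMulVec, dotProduct_comm, hv]⟩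
  refine le_trans ?_ (le_iSup₂ (f := fun ρ (_ : ρ ∈ {ρ ∈ (Set.univ : Set (Mat n)) | IsDensity ρ}) =>
    ⨅ σ ∈ {σ ∈ S | IsDensity σ}, Dp p ρ σ) (vecMulVec v (star v)) ⟨trivial, hd⟩)
  exact le_iInf₂ fun σ hσ => lower_pure v hv hσ.2.1 hC (h σ hσ.1 hσ.2) p hp

end

section

lemma inv_bound {σ ρ : Mat n} (hσ : σ.PosDef) {c : ℝ} (hc : 0 ≤ c)
    (h : (c • σ - ρ).PosSemidef) (x : n → ℂ) (r : ℝ)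
    (hr : ∀ u, r * ‖star x ⬝ᵥ u‖ ^ 2 ≤ (star u ⬝ᵥ (ρ *ᵥ u)).re) :
    r * ∑ k, wt hσ.1 x k / hσ.1.eigenvalues k ≤ c := by
  set M : Mat n := cfc (fun x : ℝ => x⁻¹) σ with hM
  set t := ∑ k, wt hσ.1 x k / hσ.1.eigenvalues k with ht
  have hMH : Mᴴ = M := cfc_herm hσ.1 _
  have ht0 : 0 ≤ t := Finset.sum_nonneg fun k _ =>
    div_nonneg (wt_nonneg _ _ _) (hσ.eigenvalues_pos k).le
  have hxM : star x ⬝ᵥ (M *ᵥ x) = (t : ℂ) := by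
    rw [hM, cfc_quad hσ.1, ht]
    congr 1
    exact Finset.sum_congr rfl fun k _ => by rw [div_eq_mul_inv, mul_comm]
  have hMM : M * σ * M = M := by
    have e1 := cfc_mul_form hσ.1 (fun x : ℝ => x⁻¹) id
    rw [cfc_id ℝ σ (show IsSelfAdjoint σ from hσ.1)] at e1
    rw [hM, e1, cfc_mul_form hσ.1]
    congr 1
    ext y
    by_cases hy : y = 0
    · simp [hy]
    · simp [hy]
  have huu : star (M *ᵥ x) ⬝ᵥ (σ *ᵥ (M *ᵥ x)) = (t : ℂ) := by
    rw [star_mulVec, hMH, ← dotProduct_mulVec, mulVec_mulVec, mulVec_mulVec, hMM, hxM]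
  have h1 := hr (M *ᵥ x)
  have h2 := h.re_dotProduct_nonneg (M *ᵥ x)
  rw [sub_mulVec, dotProduct_sub, smul_mulVec, dotProduct_smul, huu, Complex.real_smul,
    ← Complex.ofReal_mul] at h2
  change 0 ≤ (((c * t : ℝ) : ℂ) - _).re at h2
  rw [Complex.sub_re, Complex.ofReal_re] at h2
  rw [hxM, Complex.norm_real, Real.norm_eq_abs, sq_abs] at h1
  rcases ht0.eq_or_lt with h0 | h0
  · rw [← h0]; simpa using hc
  · refine le_of_mul_le_mul_right ?_ h0
    nlinarith

lemma wt_le_sum {A : Mat n} (hA : A.IsHermitian) (v : n → ℂ) (j : n) :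
    wt hA v j ≤ (star v ⬝ᵥ v).re := by
  rw [wt_sum hA v, Complex.ofReal_re]
  exact Finset.single_le_sum (f := wt hA v) (fun k _ => wt_nonneg hA v k) (Finset.mem_univ j)

lemma upper_one {σ ρ : Mat n} (hσ : σ.PosDef) (hρ : IsDensity ρ) {c : ℝ} (hc : 0 < c)
    (h : (c • σ - ρ).PosSemidef) : DU ρ σ ≤ ((Real.log c : ℝ) : EReal) := by
  have hs : suppLe ρ σ := by
    intro v hv
    by_cases h0 : v = 0
    · simp [h0]
    · have := hσ.dotProduct_mulVec_pos h0
      rw [hv] at this; simp at this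
  unfold DU
  rw [if_pos hs, EReal.coe_le_coe_iff]
  have hH := hρ.1.1
  set r := hH.eigenvalues with hr
  have hr0 : ∀ j, 0 ≤ r j := hρ.1.eigenvalues_nonneg
  have hr1 : ∑ j, r j = 1 := by
    have h : ρ.trace = ∑ j, ((hH.eigenvalues j : ℝ) : ℂ) := hH.trace_eq_sum_eigenvalues
    rw [hρ.2] at h; exact_mod_cast h.symm
  have e1 : traceR (ρ * mlog ρ) = ∑ j, r j * Real.log (r j) := by
    have e := cfc_mul_form hH id Real.log
    rw [cfc_id ℝ _ (show IsSelfAdjoint _ from hH)] at e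
    unfold mlog
    rw [e, cfc_traceR hH]; rfl
  have e2 : traceR (ρ * mlog σ) =
      ∑ j, r j * ∑ k, Real.log (hσ.1.eigenvalues k) * wt hσ.1 (ev hH j) k := by
    unfold traceR mlog
    rw [ev_trace_mul hH, Complex.re_sum]
    refine Finset.sum_congr rfl fun j _ => ?_
    rw [cfc_quad hσ.1, ← Complex.ofReal_mul, Complex.ofReal_re]
  have e3 : traceR (ρ * mlog ρ - ρ * mlog σ) = traceR (ρ * mlog ρ) - traceR (ρ * mlog σ) := by
    simp [traceR, trace_sub]
  rw [e3, e1, e2, ← Finset.sum_sub_distrib]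
  have key : ∀ j, r j * Real.log (r j) -
      r j * ∑ k, Real.log (hσ.1.eigenvalues k) * wt hσ.1 (ev hH j) k ≤ r j * Real.log c := by
    intro j
    rcases (hr0 j).eq_or_lt with h0 | h0
    · simp [← h0]
    rw [← mul_sub]
    refine mul_le_mul_of_nonneg_left ?_ h0.le
    have hb := inv_bound hσ hc.le h (ev hH j) (r j) (by
      intro u
      rw [← ev_wt, cfc_id_quad hH, Complex.ofReal_re]
      exact Finset.single_le_sum (f := fun k => hH.eigenvalues k * wt hH u k)
        (fun k _ => mul_nonneg (hr0 k) (wt_nonneg hH u k)) (Finset.mem_univ j))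
    have hw1 : ∑ k, wt hσ.1 (ev hH j) k = 1 := by
      have := wt_sum hσ.1 (ev hH j)
      rw [ev_unit] at this; exact_mod_cast this.symm
    have hinv : ∀ k, wt hσ.1 (ev hH j) k ≠ 0 → 0 < (hσ.1.eigenvalues k)⁻¹ :=
      fun k _ => inv_pos.2 (hσ.eigenvalues_pos k)
    have hj := jensen_log _ (fun k => (hσ.1.eigenvalues k)⁻¹) (wt_nonneg hσ.1 (ev hH j)) hw1 hinv
    have hpos := log_mean_pos _ (fun k => (hσ.1.eigenvalues k)⁻¹) (wt_nonneg hσ.1 (ev hH j)) hw1 hinv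
    simp only [← div_eq_mul_inv] at hj hpos
    have hl := Real.log_le_log (mul_pos h0 hpos) hb
    rw [Real.log_mul h0.ne' hpos.ne'] at hl
    simp only [Real.log_inv, mul_neg, Finset.sum_neg_distrib] at hj
    simp only [mul_comm] at hj ⊢
    linarith
  calc _ ≤ ∑ j, r j * Real.log c := Finset.sum_le_sum fun j _ => key j
    _ = _ := by rw [← Finset.sum_mul, hr1, one_mul]

lemma upper_inf {σ ρ : Mat n} (hσ : IsDensity σ) (hρ : IsDensity ρ) {c : ℝ} (hc : 0 < c)
    (h : (c • σ - ρ).PosSemidef) : Dinf ρ σ ≤ ((Real.log c : ℝ) : EReal) := by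
  unfold Dinf
  rw [if_pos ⟨c, hc.le, h⟩, EReal.coe_le_coe_iff]
  have hlb : ∀ d ∈ {c : ℝ | 0 ≤ c ∧ (c • σ - ρ).PosSemidef}, (1 : ℝ) ≤ d := by
    rintro d ⟨_, hd⟩
    have := hd.trace_nonneg
    rw [trace_sub, trace_smul, hσ.2, hρ.2, Complex.real_smul, mul_one, sub_nonneg] at this
    exact_mod_cast this
  have h1 : (1 : ℝ) ≤ sInf {c : ℝ | 0 ≤ c ∧ (c • σ - ρ).PosSemidef} :=
    le_csInf ⟨c, hc.le, h⟩ hlb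
  exact Real.log_le_log (by linarith) (csInf_le ⟨1, hlb⟩ ⟨hc.le, h⟩)

lemma upper_pow {σ ρ : Mat n} (hσ : σ.PosDef) (hρ : IsDensity ρ) {c : ℝ} (hc : 0 < c)
    (h : (c • σ - ρ).PosSemidef) (P : ℝ) (hP0 : 0 < P) (hP1 : P ≠ 1) :
    0 < traceR (mpow (sandwich P ρ σ) P) ∧
    (P - 1)⁻¹ * Real.log (traceR (mpow (sandwich P ρ σ) P)) ≤ Real.log c := by
  set a := (1 - P) / (2 * P) with haa
  set θ := (1 - P) / P with hθ
  have h2a : a + a = θ := by rw [haa, hθ]; field_simp; ring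
  set s := hσ.1.eigenvalues with hs
  have hs0 : ∀ k, 0 < s k := hσ.eigenvalues_pos
  set B : Mat n := cfc Real.sqrt ρ with hB
  have hBH : Bᴴ = B := cfc_herm hρ.1.1 _
  have hBB : B * B = ρ := by
    rw [hB, cfc_mul_form hρ.1.1]
    conv_rhs => rw [← cfc_id ℝ ρ (show IsSelfAdjoint ρ from hρ.1.1)]
    rw [cfc_form hρ.1.1, cfc_form hρ.1.1]
    simp only [Real.mul_self_sqrt (hρ.1.eigenvalues_nonneg _), id]
  set G : Mat n := mpow σ a with hG
  have hGH : Gᴴ = G := cfc_herm hσ.1 _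
  have hX : sandwich P ρ σ = (G * B) * (B * G) := by
    unfold sandwich; rw [← haa, ← hBB]; simp only [mul_assoc, hG]
  set Z : Mat n := (B * G) * (G * B) with hZ
  have hXH : (sandwich P ρ σ).IsHermitian := by
    rw [hX, IsHermitian, conjTranspose_mul, conjTranspose_mul, conjTranspose_mul, hGH, hBH]
  have hZH : Z.IsHermitian := by
    rw [hZ, IsHermitian, conjTranspose_mul, conjTranspose_mul, conjTranspose_mul, hGH, hBH]
  have heig : hXH.eigenvalues = hZH.eigenvalues := by
    rw [hXH.eigenvalues_eq_eigenvalues_iff hZH, hX, hZ, charpoly_mul_comm]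
  have htr : traceR (mpow (sandwich P ρ σ) P) = ∑ j, hZH.eigenvalues j ^ P := by
    unfold mpow; rw [cfc_traceR hXH, heig]
  set y : n → n → ℂ := fun j => B *ᵥ ev hZH j with hy
  have hstar : ∀ j u, star (y j) ⬝ᵥ u = star (ev hZH j) ⬝ᵥ (B *ᵥ u) := fun j u => by
    rw [hy, star_mulVec, hBH, ← dotProduct_mulVec]
  have hμ : ∀ j, hZH.eigenvalues j = ∑ k, wt hσ.1 (y j) k * s k ^ θ := by
    intro j
    have e1 : star (ev hZH j) ⬝ᵥ (Z *ᵥ ev hZH j) = (hZH.eigenvalues j : ℂ) := by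
      rw [ev_eig, dotProduct_smul, ev_unit]; simp
    have e2 : star (ev hZH j) ⬝ᵥ (Z *ᵥ ev hZH j) =
        ((∑ k, wt hσ.1 (y j) k * s k ^ θ : ℝ) : ℂ) := by
      have hZv : ∀ v, Z *ᵥ v = B *ᵥ ((G * G) *ᵥ (B *ᵥ v)) := fun v => by
        rw [hZ]; simp only [mulVec_mulVec, mul_assoc]
      rw [hZv, ← hstar, hG]
      unfold mpow
      rw [cfc_mul_form hσ.1]
      change star (y j) ⬝ᵥ (_ *ᵥ y j) = _
      rw [cfc_quad hσ.1]
      congr 1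
      refine Finset.sum_congr rfl fun k _ => ?_
      rw [← Real.rpow_add (hs0 k), h2a, mul_comm]
    exact_mod_cast e1.symm.trans e2
  have hsumy : ∑ j, ∑ k, wt hσ.1 (y j) k = 1 := by
    have e : ∑ j, star (ev hZH j) ⬝ᵥ (ρ *ᵥ ev hZH j) = 1 := by rw [ev_trace, hρ.2]
    have : ∀ j, star (ev hZH j) ⬝ᵥ (ρ *ᵥ ev hZH j) = ((∑ k, wt hσ.1 (y j) k : ℝ) : ℂ) := by
      intro j
      rw [← wt_sum, hstar, ← hBB, ← mulVec_mulVec]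
    simp only [this] at e
    exact_mod_cast e
  have hqb : ∀ j, ∑ k, wt hσ.1 (y j) k / s k ≤ c := by
    intro j
    have := inv_bound hσ hc.le h (y j) 1 (by
      intro u
      rw [one_mul, hstar, ← ev_wt]
      refine (wt_le_sum hZH (B *ᵥ u) j).trans (le_of_eq ?_)
      rw [star_mulVec, hBH, ← dotProduct_mulVec, mulVec_mulVec, hBB])
    simpa using this
  have hwn : ∀ j k, 0 ≤ wt hσ.1 (y j) k := fun j k => wt_nonneg _ _ _
  have hqn : ∀ j k, 0 ≤ wt hσ.1 (y j) k / s k := fun j k => div_nonneg (hwn j k) (hs0 k).le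
  have hq1 : ∀ j, ∑ k, wt hσ.1 (y j) k / s k * s k ^ (1 / P) = hZH.eigenvalues j := by
    intro j
    rw [hμ j]
    refine Finset.sum_congr rfl fun k _ => ?_
    have : θ = 1 / P - 1 := by rw [hθ]; field_simp
    rw [this, Real.rpow_sub_one (hs0 k).ne']
    ring
  have hq2 : ∀ j, ∑ k, wt hσ.1 (y j) k / s k * (s k ^ (1 / P)) ^ P = ∑ k, wt hσ.1 (y j) k := by
    intro j
    refine Finset.sum_congr rfl fun k _ => ?_
    rw [← Real.rpow_mul (hs0 k).le, one_div, inv_mul_cancel₀ hP0.ne', Real.rpow_one,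
      div_mul_cancel₀ _ (hs0 k).ne']
  have hμ0 : ∀ j, 0 ≤ hZH.eigenvalues j := fun j => by
    rw [← hq1 j]
    exact Finset.sum_nonneg fun k _ => mul_nonneg (hqn j k) (Real.rpow_nonneg (hs0 k).le _)
  -- degenerate vectors
  have hdeg : ∀ j, ¬ 0 < ∑ k, wt hσ.1 (y j) k / s k → ∑ k, wt hσ.1 (y j) k = 0 := by
    intro j hj
    have h0 : ∑ k, wt hσ.1 (y j) k / s k = 0 :=
      le_antisymm (not_lt.1 hj) (Finset.sum_nonneg fun k _ => hqn j k)
    have h1 := (Finset.sum_eq_zero_iff_of_nonneg fun k _ => hqn j k).1 h0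
    refine Finset.sum_eq_zero fun k hk => ?_
    have := h1 k hk
    rcases div_eq_zero_iff.1 this with h | h
    · exact h
    · exact absurd h (hs0 k).ne'
  have hpos : 0 < ∑ j, hZH.eigenvalues j ^ P := by
    refine lt_of_le_of_ne (Finset.sum_nonneg fun j _ => Real.rpow_nonneg (hμ0 j) _) fun h0 => ?_
    have h1 := (Finset.sum_eq_zero_iff_of_nonneg fun j _ => Real.rpow_nonneg (hμ0 j) P).1 h0.symm
    have h2 : ∀ j, ∑ k, wt hσ.1 (y j) k = 0 := by
      intro j
      have h3 : hZH.eigenvalues j = 0 :=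
        ((Real.rpow_eq_zero (hμ0 j) hP0.ne').1 (h1 j (Finset.mem_univ _)))
      rw [hμ j] at h3
      have h4 := (Finset.sum_eq_zero_iff_of_nonneg fun k _ =>
        mul_nonneg (hwn j k) (Real.rpow_nonneg (hs0 k).le θ)).1 h3
      refine Finset.sum_eq_zero fun k hk => ?_
      rcases mul_eq_zero.1 (h4 k hk) with h | h
      · exact h
      · exact absurd h (Real.rpow_pos_of_pos (hs0 k) _).ne'
    simp [h2] at hsumy
  rw [htr]
  refine ⟨hpos, ?_⟩
  have hmul : ∑ j, c ^ (P - 1) * ∑ k, wt hσ.1 (y j) k = c ^ (P - 1) := by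
    rw [← Finset.mul_sum, hsumy, mul_one]
  rcases lt_or_gt_of_ne hP1 with hlt | hgt
  · have key : c ^ (P - 1) ≤ ∑ j, hZH.eigenvalues j ^ P := by
      rw [← hmul]
      refine Finset.sum_le_sum fun j _ => ?_
      by_cases hj : 0 < ∑ k, wt hσ.1 (y j) k / s k
      · have := jensen_pow' _ (fun k => s k ^ (1 / P)) (hqn j)
          (fun k => Real.rpow_nonneg (hs0 k).le _) hj P hP0.le hlt.le
        rw [hq1, hq2] at this
        refine le_trans (mul_le_mul_of_nonneg_right ?_ (Finset.sum_nonneg fun k _ => hwn j k)) this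
        exact Real.rpow_le_rpow_of_nonpos hj (hqb j) (by linarith)
      · rw [hdeg j hj, mul_zero]
        exact Real.rpow_nonneg (hμ0 j) _
    have hl := Real.log_le_log (Real.rpow_pos_of_pos hc _) key
    rw [Real.log_rpow hc] at hl
    have := mul_le_mul_of_nonpos_left hl (inv_nonpos.2 (by linarith : P - 1 ≤ 0))
    rwa [inv_mul_cancel_left₀ (sub_ne_zero.2 hP1)] at this
  · have key : ∑ j, hZH.eigenvalues j ^ P ≤ c ^ (P - 1) := by
      rw [← hmul]
      refine Finset.sum_le_sum fun j _ => ?_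
      by_cases hj : 0 < ∑ k, wt hσ.1 (y j) k / s k
      · have := jensen_pow _ (fun k => s k ^ (1 / P)) (hqn j)
          (fun k => Real.rpow_nonneg (hs0 k).le _) hj P hgt.le
        rw [hq1, hq2] at this
        refine le_trans this (mul_le_mul_of_nonneg_right ?_ (Finset.sum_nonneg fun k _ => hwn j k))
        exact Real.rpow_le_rpow hj.le (hqb j) (by linarith)
      · have h0 := hdeg j hj
        have h1 := (Finset.sum_eq_zero_iff_of_nonneg fun k _ => hwn j k).1 h0
        have : hZH.eigenvalues j = 0 := by
          rw [hμ j]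
          exact Finset.sum_eq_zero fun k hk => by rw [h1 k hk, zero_mul]
        rw [h0, mul_zero, this, Real.zero_rpow hP0.ne']
    have hl := Real.log_le_log hpos key
    rw [Real.log_rpow hc] at hl
    have := mul_le_mul_of_nonneg_left hl (inv_nonneg.2 (by linarith : 0 ≤ P - 1))
    rwa [inv_mul_cancel_left₀ (sub_ne_zero.2 hP1)] at this

lemma upper_pd {σ ρ : Mat n} (hσ : σ.PosDef) (hσd : IsDensity σ) (hρ : IsDensity ρ) {c : ℝ}
    (hc : 0 < c) (h : (c • σ - ρ).PosSemidef) (p : ℝ≥0∞) (hp : 2⁻¹ ≤ p) :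
    Dp p ρ σ ≤ ((Real.log c : ℝ) : EReal) := by
  have hs : suppLe ρ σ := by
    intro v hv
    by_cases h0 : v = 0
    · simp [h0]
    · have := hσ.dotProduct_mulVec_pos h0
      rw [hv] at this; simp at this
  unfold Dp
  split_ifs with h1 h2 h3 h4
  · exact upper_inf hσd hρ hc h
  · exact upper_one hσ hρ hc h
  · exact absurd hs h3.2
  all_goals
    have hP2 : 1 / 2 ≤ p.toReal := by
      have := (ENNReal.toReal_le_toReal (by simp) h1).2 hp
      simpa using this
    have hP1 : p.toReal ≠ 1 := by
      intro h; apply h2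
      rw [← ENNReal.ofReal_toReal h1, h]; simp
    have hu := upper_pow hσ hρ hc h p.toReal (by linarith) hP1
  · exact absurd h4 hu.1.ne'
  · rw [EReal.coe_le_coe_iff]; exact hu.2

lemma upper_generic (S : Set (Mat n)) {c : ℝ} (hc : 0 < c)
    (hS : ∀ σ ∈ S, ∀ a b : ℝ, a • σ + b • (1 : Mat n) ∈ S)
    (h : ∀ ρ : Mat n, IsDensity ρ → ∃ σ ∈ S, IsDensity σ ∧ (c • σ - ρ).PosSemidef)
    (p : ℝ≥0∞) (hp : 2⁻¹ ≤ p) :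
    DpRel p Set.univ S ≤ ((Real.log c : ℝ) : EReal) := by
  unfold DpRel DpSet
  refine iSup₂_le fun ρ hρ => ?_
  obtain ⟨σ, hσS, hσ, hle⟩ := h ρ hρ.2
  have hne : Nonempty n := by
    by_contra hne
    rw [not_nonempty_iff] at hne
    have := hσ.2
    simp [trace] at this
  have hN : (0 : ℝ) < Fintype.card n := by exact_mod_cast Fintype.card_pos
  refine EReal.le_of_forall_lt_iff_le.1 fun z hz => ?_
  rw [EReal.coe_lt_coe_iff] at hz
  set ε : ℝ := 1 - Real.exp (Real.log c - z) with hε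
  have hε1 : 0 < ε := by
    have : Real.exp (Real.log c - z) < 1 := by
      have h9 : Real.log c - z < 0 := by linarith
      simpa using Real.exp_lt_exp.2 h9
    rw [hε]; linarith
  have h1ε : 1 - ε = Real.exp (Real.log c - z) := by rw [hε]; ring
  have hε2 : 0 < 1 - ε := by rw [h1ε]; exact Real.exp_pos _
  set τ : Mat n := (1 - ε) • σ + (ε / Fintype.card n) • (1 : Mat n) with hτ
  have hpd1 : ((ε / Fintype.card n) • (1 : Mat n)).PosDef :=
    PosDef.one.smul (div_pos hε1 hN)
  have hpd : τ.PosDef := hpd1.posSemidef_add (hσ.1.smul hε2.le)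
  have hτd : IsDensity τ := by
    refine ⟨hpd.posSemidef, ?_⟩
    rw [hτ, trace_add, trace_smul, trace_smul, hσ.2, trace_one, Complex.real_smul,
      Complex.real_smul]
    push_cast
    have : (Fintype.card n : ℂ) ≠ 0 := by exact_mod_cast hN.ne'
    field_simp; ring
  have hz' : c / (1 - ε) = Real.exp z := by
    rw [h1ε, Real.exp_sub, Real.exp_log hc]; field_simp
  have hle' : (Real.exp z • τ - ρ).PosSemidef := by
    have e : Real.exp z • τ - ρ = (c • σ - ρ) + Real.exp z • ((ε / Fintype.card n) • (1 : Mat n)) := by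
      rw [hτ, smul_add, smul_smul, ← hz', div_mul_cancel₀ _ hε2.ne']
      abel
    rw [e]
    exact hle.add (hpd1.posSemidef.smul (Real.exp_pos z).le)
  have := upper_pd hpd hτd hρ.2 (Real.exp_pos z) hle' p hp
  rw [Real.log_exp] at this
  exact (iInf₂_le τ ⟨hS σ hσS _ _, hτd⟩).trans this

end

section

open scoped Kronecker

lemma psd_norm {X : Mat n} (hX : X.PosSemidef) :
    ∃ N : (n → ℂ) →ₗ[ℂ] EuclideanSpace ℂ n, ∀ v, (star v ⬝ᵥ (X *ᵥ v)).re = ‖N v‖ ^ 2 := by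
  set B : Mat n := cfc Real.sqrt X with hB
  have hBH : Bᴴ = B := cfc_herm hX.1 _
  have hBB : B * B = X := by
    rw [hB, cfc_mul_form hX.1]
    conv_rhs => rw [← cfc_id ℝ X (show IsSelfAdjoint X from hX.1)]
    rw [cfc_form hX.1, cfc_form hX.1]
    simp only [Real.mul_self_sqrt (hX.eigenvalues_nonneg _), id]
  refine ⟨(WithLp.linearEquiv 2 ℂ (n → ℂ)).symm.toLinearMap ∘ₗ B.mulVecLin, fun v => ?_⟩
  have e : star v ⬝ᵥ (X *ᵥ v) = star (B *ᵥ v) ⬝ᵥ (B *ᵥ v) := by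
    rw [star_mulVec, hBH, ← dotProduct_mulVec, mulVec_mulVec, hBB]
  rw [e, EuclideanSpace.norm_sq_eq, dotProduct, Complex.re_sum]
  refine Finset.sum_congr rfl fun i _ => ?_
  simp [← Complex.normSq_eq_norm_sq, Complex.normSq_apply]

lemma psd_cauchy {X : Mat n} (hX : X.PosSemidef) {T : Type*} [Fintype T] (c : T → ℂ)
    (z : T → n → ℂ) :
    (star (∑ t, c t • z t) ⬝ᵥ (X *ᵥ (∑ t, c t • z t))).re ≤
      (∑ t, ‖c t‖ ^ 2) * ∑ t, (star (z t) ⬝ᵥ (X *ᵥ z t)).re := by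
  obtain ⟨N, hN⟩ := psd_norm hX
  simp only [hN, map_sum, map_smul]
  have h1 : ‖∑ t, c t • N (z t)‖ ≤ ∑ t, ‖c t‖ * ‖N (z t)‖ :=
    (norm_sum_le _ _).trans (le_of_eq (by simp only [norm_smul]))
  exact (pow_le_pow_left₀ (norm_nonneg _) h1 2).trans (Finset.sum_mul_sq_le_sq_mul_sq _ _ _)

variable {A B : Type*} [Fintype A] [DecidableEq A] [Fintype B] [DecidableEq B]

/-- partial trace over the second factor -/
def ptr (X : Mat (A × B)) : Mat A := Matrix.of fun a c => ∑ b, X (a, b) (c, b)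

/-- the vector `f ⊗ e_s` -/
def zv (f : A → ℂ) (s : B) : A × B → ℂ := fun i => if i.2 = s then f i.1 else 0

lemma zv_quad (X : Mat (A × B)) (f : A → ℂ) (s : B) :
    star (zv f s) ⬝ᵥ (X *ᵥ zv f s) = ∑ a, ∑ a', star (f a) * (X (a, s) (a', s) * f a') := by
  simp only [dotProduct, mulVec, Fintype.sum_prod_type, zv, Pi.star_apply, apply_ite star, star_zero,
    ite_mul, zero_mul, mul_ite, mul_zero, Finset.sum_ite_eq', Finset.sum_ite_eq,
    Finset.mem_univ, if_true, Finset.mul_sum]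
  refine Finset.sum_congr rfl fun a _ => ?_
  rw [Finset.sum_comm]
  simp

lemma zv_quad_sum (X : Mat (A × B)) (f : A → ℂ) :
    ∑ s, star (zv f s) ⬝ᵥ (X *ᵥ zv f s) = star f ⬝ᵥ (ptr X *ᵥ f) := by
  simp only [zv_quad]
  simp only [dotProduct, mulVec, ptr, Matrix.of_apply, Finset.sum_mul, Finset.mul_sum,
    Pi.star_apply]
  rw [Finset.sum_comm]
  refine Finset.sum_congr rfl fun a _ => ?_
  rw [Finset.sum_comm]

lemma kron_quad (Y : Mat A) (x : A × B → ℂ) :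
    star x ⬝ᵥ ((Y ⊗ₖ (1 : Mat B)) *ᵥ x) =
      ∑ t, star (fun a => x (a, t)) ⬝ᵥ (Y *ᵥ fun a => x (a, t)) := by
  simp only [dotProduct, mulVec, Fintype.sum_prod_type, kroneckerMap_apply, Pi.star_apply, one_apply,
    mul_ite, mul_one, mul_zero, ite_mul, zero_mul, Finset.sum_ite_eq, Finset.mem_univ, if_true]
  rw [Finset.sum_comm]

lemma kron_herm {Y : Mat A} (h : Y.IsHermitian) : (Y ⊗ₖ (1 : Mat B)).IsHermitian := by
  rw [IsHermitian, conjTranspose_kronecker, h, conjTranspose_one]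

lemma ptr_herm {X : Mat (A × B)} (h : X.IsHermitian) : (ptr X).IsHermitian := by
  ext a a'
  simp only [ptr, conjTranspose_apply, Matrix.of_apply, star_sum]
  exact Finset.sum_congr rfl fun b _ => h.apply _ _

lemma psd_of_re {M : Mat n} (h : M.IsHermitian) (h2 : ∀ x, 0 ≤ (star x ⬝ᵥ (M *ᵥ x)).re) :
    M.PosSemidef := by
  refine PosSemidef.of_dotProduct_mulVec_nonneg h fun x => ?_
  have := h2 x
  rw [cfc_id_quad h x] at this ⊢
  rw [Complex.ofReal_re] at this
  exact_mod_cast this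

lemma psd_sub {M X : Mat n} (hM : M.IsHermitian) (hX : X.IsHermitian) (c : ℝ)
    (h : ∀ x, (star x ⬝ᵥ (X *ᵥ x)).re ≤ c * (star x ⬝ᵥ (M *ᵥ x)).re) :
    (c • M - X).PosSemidef := by
  have hcM : (c • M).IsHermitian := by
    rw [IsHermitian, conjTranspose_smul, hM, star_trivial]
  refine psd_of_re (hcM.sub hX) fun x => ?_
  rw [sub_mulVec, dotProduct_sub, smul_mulVec, dotProduct_smul, Complex.sub_re, Complex.real_smul,
    Complex.re_ofReal_mul]
  linarith [h x]

lemma F1 {X : Mat (A × B)} (hX : X.PosSemidef) :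
    ((Fintype.card B : ℝ) • (ptr X ⊗ₖ (1 : Mat B)) - X).PosSemidef := by
  refine psd_sub (kron_herm (ptr_herm hX.1)) hX.1 _ fun x => ?_
  have hx : x = ∑ t : B, (1 : ℂ) • zv (fun a => x (a, t)) t := by
    ext ⟨a, b⟩
    simp [zv]
  have h1 := psd_cauchy hX (fun _ : B => (1 : ℂ)) (fun t => zv (fun a => x (a, t)) t)
  rw [← hx] at h1
  refine h1.trans ?_
  simp only [norm_one, one_pow, Finset.sum_const, Finset.card_univ, nsmul_eq_mul, mul_one]
  refine mul_le_mul_of_nonneg_left ?_ (Nat.cast_nonneg _)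
  rw [kron_quad, Complex.re_sum]
  refine Finset.sum_le_sum fun t _ => ?_
  rw [← zv_quad_sum, Complex.re_sum]
  exact Finset.single_le_sum (f := fun s => (star (zv (fun a => x (a, t)) s) ⬝ᵥ
    (X *ᵥ zv (fun a => x (a, t)) s)).re) (fun s _ => hX.re_dotProduct_nonneg _) (Finset.mem_univ t)

lemma ev_expand {M : Mat n} (h : M.IsHermitian) (f : n → ℂ) :
    f = ∑ i, (star (ev h i) ⬝ᵥ f) • ev h i := by
  conv_lhs => rw [← one_mulVec f, ← eu_mul' h, ← mulVec_mulVec]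
  ext a
  simp only [mulVec, dotProduct, ev, Finset.sum_apply, Pi.smul_apply, smul_eq_mul, Pi.star_apply,
    conjTranspose_apply]
  exact Finset.sum_congr rfl fun i _ => mul_comm _ _

lemma F2 {X : Mat (A × B)} (hX : X.PosSemidef) :
    ((Fintype.card A : ℝ) • (ptr X ⊗ₖ (1 : Mat B)) - X).PosSemidef := by
  have hω := ptr_herm hX.1
  refine psd_sub (kron_herm hω) hX.1 _ fun x => ?_
  set c : A → B → ℂ := fun i t => star (ev hω i) ⬝ᵥ fun a => x (a, t) with hc
  set y : A → A × B → ℂ := fun i => ∑ t, c i t • zv (ev hω i) t with hy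
  have hx : x = ∑ i : A, (1 : ℂ) • y i := by
    ext ⟨a, b⟩
    have := congrFun (ev_expand hω (fun a => x (a, b))) a
    simp only [one_smul, hy, Finset.sum_apply, zv, Pi.smul_apply, smul_eq_mul, mul_ite, mul_zero,
      Finset.sum_ite_eq, Finset.mem_univ, if_true] at this ⊢
    exact this
  have h1 := psd_cauchy hX (fun _ : A => (1 : ℂ)) y
  rw [← hx] at h1
  refine h1.trans ?_
  simp only [norm_one, one_pow, Finset.sum_const, Finset.card_univ, nsmul_eq_mul, mul_one]
  refine mul_le_mul_of_nonneg_left ?_ (Nat.cast_nonneg _)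
  rw [kron_quad, Complex.re_sum]
  have h2 : ∀ i, (star (y i) ⬝ᵥ (X *ᵥ y i)).re ≤ (∑ t, ‖c i t‖ ^ 2) * hω.eigenvalues i := by
    intro i
    refine (psd_cauchy hX (c i) (fun t => zv (ev hω i) t)).trans (le_of_eq ?_)
    rw [← Complex.re_sum, zv_quad_sum, ev_eig, dotProduct_smul, ev_unit]
    simp
  refine (Finset.sum_le_sum fun i _ => h2 i).trans (le_of_eq ?_)
  simp only [cfc_id_quad hω, Complex.ofReal_re, ev_wt, Finset.sum_mul]
  rw [Finset.sum_comm]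
  exact Finset.sum_congr rfl fun t _ => Finset.sum_congr rfl fun i _ => mul_comm _ _

lemma ptr_trace (X : Mat (A × B)) : (ptr X).trace = X.trace := by
  simp [trace, ptr, Fintype.sum_prod_type]

end

section

open scoped Kronecker

variable {A B : Type*} [Fintype A] [DecidableEq A] [Fintype B] [DecidableEq B]
variable {K : Type*} [Fintype K] [DecidableEq K]

/-- matrices of the form `y ⊗ 1`, transported along an equivalence of index types -/
def SeSet (e : n ≃ A × B) : Set (Mat n) :=
  {z | ∃ y : Mat A, z = (y ⊗ₖ (1 : Mat B)).submatrix e e}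

lemma mem1 : tensorSpan (Set.univ : Set (Mat A)) (scalarAlg B) = SeSet (Equiv.refl (A × B)) := by
  ext z
  constructor
  · intro hz
    induction (show z ∈ Submodule.span ℂ _ from hz) using Submodule.span_induction with
    | mem x hx =>
      obtain ⟨x, -, w, ⟨c, rfl⟩, rfl⟩ := hx
      exact ⟨c • x, by simp [kronecker_smul, smul_kronecker]⟩
    | zero => exact ⟨0, by simp⟩
    | add x y hx hy ihx ihy =>
      obtain ⟨a, rfl⟩ := ihx hx
      obtain ⟨b, rfl⟩ := ihy hy
      exact ⟨a + b, by simp [add_kronecker]⟩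
    | smul c x hx ihx =>
      obtain ⟨a, rfl⟩ := ihx hx
      exact ⟨c • a, by simp [smul_kronecker]⟩
  · rintro ⟨y, rfl⟩
    exact Submodule.subset_span ⟨y, trivial, 1, ⟨1, by simp⟩, by simp⟩

lemma mem2 : tensorSpan (Set.univ : Set (Mat K))
    (tensorSpan (Set.univ : Set (Mat A)) (scalarAlg B)) =
      SeSet (Equiv.prodAssoc K A B).symm := by
  ext z
  constructor
  · intro hz
    induction (show z ∈ Submodule.span ℂ _ from hz) using Submodule.span_induction with
    | mem x hx =>
      obtain ⟨x, -, w, hw, rfl⟩ := hx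
      rw [mem1] at hw
      obtain ⟨y, rfl⟩ := hw
      refine ⟨x ⊗ₖ y, ?_⟩
      ext i j
      simp [mul_assoc]
    | zero => exact ⟨0, by simp⟩
    | add x y hx hy ihx ihy =>
      obtain ⟨a, rfl⟩ := ihx hx
      obtain ⟨b, rfl⟩ := ihy hy
      exact ⟨a + b, by rw [add_kronecker]; rfl⟩
    | smul c x hx ihx =>
      obtain ⟨a, rfl⟩ := ihx hx
      exact ⟨c • a, by simp [smul_kronecker, submatrix_smul]⟩
  · rintro ⟨y, rfl⟩
    have : (y ⊗ₖ (1 : Mat B)).submatrix (Equiv.prodAssoc K A B).symm (Equiv.prodAssoc K A B).symm =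
        ∑ k : K, ∑ k' : K, (Matrix.single k k' (1:ℂ)) ⊗ₖ
          ((Matrix.of fun a a' => y (k, a) (k', a')) ⊗ₖ (1 : Mat B)) := by
      ext i j
      simp only [Matrix.sum_apply, kroneckerMap_apply, Matrix.single_apply, ite_and, ite_mul, zero_mul,
        one_mul, Finset.sum_ite_eq', Finset.sum_ite_eq, Finset.mem_univ, if_true, Matrix.of_apply,
        submatrix_apply, Equiv.prodAssoc_symm_apply]
      simp
    rw [this]
    refine Submodule.sum_mem _ fun k _ => Submodule.sum_mem _ fun k' _ => ?_
    refine Submodule.subset_span ⟨_, trivial, _, ?_, rfl⟩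
    exact Submodule.subset_span ⟨_, trivial, 1, ⟨1, by simp⟩, rfl⟩

lemma Se_closed (e : n ≃ A × B) : ∀ σ ∈ SeSet e, ∀ a b : ℝ, a • σ + b • (1:Mat n) ∈ SeSet e := by
  rintro σ ⟨y, rfl⟩ a b
  refine ⟨a • y + b • 1, ?_⟩
  have : (1 : Mat n) = ((1 : Mat A) ⊗ₖ (1 : Mat B)).submatrix e e := by
    rw [one_kronecker_one, submatrix_one_equiv]
  rw [this]
  simp [add_kronecker, smul_kronecker, submatrix_smul, submatrix_add]

lemma Ekron_psd {X : Mat (A × B)} (hX : X.PosSemidef) :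
    ((Fintype.card B : ℝ) • (ptr X ⊗ₖ (1 : Mat B))).PosSemidef := by
  have := (F1 hX).add hX
  rwa [sub_add_cancel] at this

lemma trace_submatrix_equiv (e : n ≃ A) (M : Mat A) : (M.submatrix e e).trace = M.trace := by
  simp only [trace, diag_apply, submatrix_apply]
  exact Equiv.sum_comp e (fun i => M i i)

lemma Se_sigma (e : n ≃ A × B) (ρ : Mat n) (hρ : IsDensity ρ) (d : ℝ)
    (hd : d = Fintype.card A ∨ d = Fintype.card B) [Nonempty B] :
    ∃ σ ∈ SeSet e, IsDensity σ ∧ (((Fintype.card B : ℝ) * d) • σ - ρ).PosSemidef := by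
  set X : Mat (A × B) := ρ.submatrix e.symm e.symm with hXd
  have hX : X.PosSemidef := hρ.1.submatrix _
  have hρX : ρ = X.submatrix e e := by ext i j; simp [hXd]
  have hb : (0:ℝ) < Fintype.card B := by exact_mod_cast Fintype.card_pos
  set b : ℝ := (Fintype.card B : ℝ) with hbd
  refine ⟨(((b⁻¹ : ℝ) • ptr X) ⊗ₖ (1 : Mat B)).submatrix e e, ⟨_, rfl⟩, ⟨?_, ?_⟩, ?_⟩
  · refine PosSemidef.submatrix ?_ _
    have := (Ekron_psd hX).smul (show (0:ℝ) ≤ b⁻¹ * b⁻¹ by positivity)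
    rw [smul_smul, mul_assoc, inv_mul_cancel₀ hb.ne', mul_one] at this
    rwa [smul_kronecker]
  · rw [trace_submatrix_equiv, trace_kronecker, trace_smul, ptr_trace, hXd,
      trace_submatrix_equiv, hρ.2, trace_one]
    have : (Fintype.card B : ℂ) ≠ 0 := by simp
    rw [Complex.real_smul, hbd]
    push_cast
    field_simp
  · have h : (d • (ptr X ⊗ₖ (1 : Mat B)) - X).PosSemidef := by
      rcases hd with rfl | rfl
      · exact F2 hX
      · exact F1 hX
    have h2 := h.submatrix e
    rw [hρX]
    convert h2 using 1
    ext i j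
    simp only [Matrix.sub_apply, Matrix.smul_apply, submatrix_apply, kroneckerMap_apply, Complex.real_smul]
    have : (b:ℂ) ≠ 0 := by exact_mod_cast hb.ne'
    push_cast
    field_simp

/-- maximally entangled vector of Schmidt rank `r` -/
def ent (e : n ≃ A × B) {r : ℕ} (j : Fin r → A) (l : Fin r → B) : n → ℂ :=
  ∑ t, Pi.single (e.symm (j t, l t)) (((Real.sqrt r)⁻¹ : ℝ) : ℂ)

lemma ent_quad (e : n ≃ A × B) {r : ℕ} (j : Fin r → A) (l : Fin r → B) (M : Mat n) :
    star (ent e j l) ⬝ᵥ (M *ᵥ ent e j l) = ((r:ℂ))⁻¹ *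
      ∑ t, ∑ t', M (e.symm (j t, l t)) (e.symm (j t', l t')) := by
  have hs : (((Real.sqrt r)⁻¹ : ℝ) : ℂ) * (((Real.sqrt r)⁻¹ : ℝ) : ℂ) = (r:ℂ)⁻¹ := by
    rw [← Complex.ofReal_mul, ← mul_inv, Real.mul_self_sqrt (Nat.cast_nonneg _)]
    push_cast; rfl
  have hst : ∀ i, star (Pi.single i (((Real.sqrt r)⁻¹ : ℝ) : ℂ) : n → ℂ)
      = Pi.single i (((Real.sqrt r)⁻¹ : ℝ) : ℂ) := by
    intro i
    ext k
    by_cases h : k = i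
    · subst h; simp
    · simp [h]
  rw [ent, star_sum, sum_dotProduct, Finset.mul_sum]
  refine Finset.sum_congr rfl fun t _ => ?_
  rw [mulVec_sum, dotProduct_sum, Finset.mul_sum]
  refine Finset.sum_congr rfl fun t' _ => ?_
  rw [hst, single_dotProduct, mulVec_single, ← hs]
  simp
  ring

lemma ent_unit (e : n ≃ A × B) {r : ℕ} (hr : 0 < r) (j : Fin r → A) (l : Fin r → B)
    (hl : Function.Injective l) : star (ent e j l) ⬝ᵥ ent e j l = 1 := by
  have := ent_quad e j l 1
  rw [one_mulVec] at this
  rw [this]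
  have h : ∀ t t', (1 : Mat n) (e.symm (j t, l t)) (e.symm (j t', l t')) = if t = t' then 1 else 0 := by
    intro t t'
    rw [one_apply]
    refine if_congr ⟨fun h => ?_, fun h => by rw [h]⟩ rfl rfl
    have := e.symm.injective h
    exact hl (Prod.ext_iff.1 this).2
  simp only [h, Finset.sum_ite_eq, Finset.mem_univ, if_true, Finset.sum_const, Finset.card_univ,
    Fintype.card_fin, nsmul_eq_mul, mul_one]
  have : (r:ℂ) ≠ 0 := by exact_mod_cast hr.ne'
  field_simp

lemma ent_le (e : n ≃ A × B) {r : ℕ} (hr : 0 < r) (j : Fin r → A) (l : Fin r → B)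
    (hj : Function.Injective j) (hl : Function.Injective l) [Nonempty B] :
    ∀ σ ∈ SeSet e, IsDensity σ → (star (ent e j l) ⬝ᵥ (σ *ᵥ ent e j l)).re ≤
      1 / ((Fintype.card B : ℝ) * r) := by
  rintro σ ⟨y, rfl⟩ ⟨hσ, htr⟩
  have hb : (0:ℝ) < Fintype.card B := by exact_mod_cast Fintype.card_pos
  have hr' : (0:ℝ) < r := by exact_mod_cast hr
  rw [ent_quad]
  have h : ∀ t t', ((y ⊗ₖ (1 : Mat B)).submatrix e e) (e.symm (j t, l t)) (e.symm (j t', l t'))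
      = if t = t' then y (j t) (j t') else 0 := by
    intro t t'
    simp [one_apply, hl.eq_iff]
  simp only [h, Finset.sum_ite_eq, Finset.mem_univ, if_true]
  have hy : ∀ a, 0 ≤ (y a a).re := by
    intro a
    obtain ⟨b⟩ := ‹Nonempty B›
    have := hσ.diag_nonneg (i := e.symm (a, b))
    simp at this
    exact (Complex.le_def.1 this).1
  have hty : (Fintype.card B : ℝ) * ∑ a, (y a a).re = 1 := by
    rw [trace_submatrix_equiv, trace_kronecker, trace_one] at htr
    have := congrArg Complex.re htr
    rw [mul_comm] at this
    simpa [trace] using this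
  have hle : ∑ t, (y (j t) (j t)).re ≤ ∑ a, (y a a).re := by
    rw [← Finset.sum_image (s := Finset.univ) (g := j) (f := fun a => (y a a).re)
      (fun a _ b _ h => hj h)]
    exact Finset.sum_le_sum_of_subset_of_nonneg (Finset.subset_univ _) fun a _ _ => hy a
  have h3 : ((r:ℂ)⁻¹ * ∑ t, y (j t) (j t)).re = (r:ℝ)⁻¹ * ∑ t, (y (j t) (j t)).re := by
    rw [← Complex.re_sum, ← Complex.re_ofReal_mul]; push_cast; rfl
  rw [h3, le_div_iff₀ (by positivity)]
  have : (r:ℝ)⁻¹ * (∑ t, (y (j t) (j t)).re) * (Fintype.card B * r) =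
    Fintype.card B * ∑ t, (y (j t) (j t)).re := by field_simp
  rw [this, ← hty]
  exact mul_le_mul_of_nonneg_left hle hb.le

lemma rel_upper (e : n ≃ A × B) [Nonempty B] (d : ℕ) (hd0 : 0 < d)
    (hd : d = Fintype.card A ∨ d = Fintype.card B) (p : ℝ≥0∞) (hp : 2⁻¹ ≤ p) :
    DpRel p Set.univ (SeSet e) ≤ ((Real.log ((Fintype.card B : ℝ) * d) : ℝ) : EReal) := by
  have hb : (0:ℝ) < Fintype.card B := by exact_mod_cast Fintype.card_pos
  have hd' : (0:ℝ) < d := by exact_mod_cast hd0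
  refine upper_generic _ (by positivity) (Se_closed e) (fun ρ hρ => ?_) p hp
  exact Se_sigma e ρ hρ d (by exact_mod_cast hd)

lemma rel_lower (e : n ≃ A × B) {r : ℕ} (hr : 0 < r) (j : Fin r → A) (l : Fin r → B)
    (hj : Function.Injective j) (hl : Function.Injective l) [Nonempty B] (p : ℝ≥0∞)
    (hp : 2⁻¹ ≤ p) :
    ((Real.log ((Fintype.card B : ℝ) * r) : ℝ) : EReal) ≤ DpRel p Set.univ (SeSet e) := by
  have hb : (0:ℝ) < Fintype.card B := by exact_mod_cast Fintype.card_pos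
  have hr' : (0:ℝ) < r := by exact_mod_cast hr
  exact lower_generic _ _ (ent_unit e hr j l hl) (by positivity) (ent_le e hr j l hj hl) p hp

lemma condExp_eq [Nonempty B] (E : Mat (A × B) →ₗ[ℂ] Mat (A × B))
    (hE : IsCondExp (SeSet (Equiv.refl (A × B))) E) (x : Mat (A × B)) :
    E x = ((Fintype.card B : ℝ)⁻¹) • (ptr x ⊗ₖ (1 : Mat B)) := by
  obtain ⟨y, hy⟩ := hE.1 x
  have hy' : E x = y ⊗ₖ (1 : Mat B) := by rw [hy]; rfl
  have hb : (Fintype.card B : ℂ) ≠ 0 := by simp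
  have key : ∀ w : Mat A, (xᴴ * (w ⊗ₖ (1 : Mat B))).trace = ((ptr x)ᴴ * w).trace := by
    intro w
    simp only [trace, diag_apply, mul_apply, Fintype.sum_prod_type, kroneckerMap_apply, one_apply,
      conjTranspose_apply, ptr, Matrix.of_apply, star_sum, Finset.sum_mul, mul_ite, mul_one, mul_zero,
      Finset.sum_ite_eq', Finset.sum_ite_eq, Finset.mem_univ, if_true]
    refine Finset.sum_congr rfl fun a _ => ?_
    rw [Finset.sum_comm]
  set D : Mat A := y - ((Fintype.card B : ℂ)⁻¹) • ptr x with hD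
  have h0 : ∀ w : Mat A, (Fintype.card B : ℂ) * (yᴴ * w).trace = ((ptr x)ᴴ * w).trace := by
    intro w
    rw [← key w, ← hE.2.2 x (w ⊗ₖ (1 : Mat B)) ⟨w, rfl⟩, hy', conjTranspose_kronecker,
      ← mul_kronecker_mul, trace_kronecker]
    simp [mul_comm]
  have h1 : (Dᴴ * D).trace = 0 := by
    have := h0 D
    rw [hD, conjTranspose_sub, sub_mul, trace_sub, conjTranspose_smul, ← hD, smul_mul, trace_smul,
      ← this]
    simp [hb]
  have h2 : D = 0 := trace_conjTranspose_mul_self_eq_zero_iff.1 h1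
  rw [hy', sub_eq_zero.1 h2]
  ext i k
  simp [Complex.real_smul]
  try ring

lemma ppIndex_eq [Nonempty B] (E : Mat (A × B) →ₗ[ℂ] Mat (A × B))
    (hE : IsCondExp (SeSet (Equiv.refl (A × B))) E) {r : ℕ} (hr : 0 < r)
    (hd : r = Fintype.card A ∨ r = Fintype.card B) (j : Fin r → A) (l : Fin r → B)
    (hj : Function.Injective j) (hl : Function.Injective l) :
    ppIndex E = ((Fintype.card B : ℝ) * r)⁻¹ := by
  have hb : (0:ℝ) < Fintype.card B := by exact_mod_cast Fintype.card_pos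
  have hr' : (0:ℝ) < r := by exact_mod_cast hr
  refine IsGreatest.csSup_eq ⟨⟨by positivity, fun x hx => ?_⟩, ?_⟩
  · have h : ((r:ℝ) • (ptr x ⊗ₖ (1 : Mat B)) - x).PosSemidef := by
      rcases hd with rfl | rfl
      · exact F2 hx
      · exact F1 hx
    have h2 := h.smul (show (0:ℝ) ≤ ((Fintype.card B : ℝ) * r)⁻¹ by positivity)
    rw [condExp_eq E hE]
    convert h2 using 1
    rw [smul_sub, smul_smul]
    congr 2
    field_simp
  · rintro c ⟨hc, h⟩
    set v := ent (Equiv.refl (A × B)) j l with hv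
    have hvu : star v ⬝ᵥ v = 1 := ent_unit _ hr j l hl
    set x : Mat (A × B) := vecMulVec v (star v) with hx
    have hxp : x.PosSemidef := posSemidef_vecMulVec_self_star v
    have hxt : x.trace = 1 := by rw [hx, trace_vecMulVec, dotProduct_comm, hvu]
    have hEp : (E x).PosSemidef := by
      have := (h x hxp).add (hxp.smul hc)
      rwa [sub_add_cancel] at this
    have hEt : (E x).trace = 1 := by
      rw [condExp_eq E hE, trace_smul, trace_kronecker, ptr_trace, hxt, trace_one]
      simp [Complex.real_smul]
    have h1 := ent_le (Equiv.refl (A × B)) hr j l hj hl (E x) (hE.1 x) ⟨hEp, hEt⟩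
    have h2 := (h x hxp).re_dotProduct_nonneg v
    have h3 : star v ⬝ᵥ (x *ᵥ v) = 1 := by
      rw [hx, vecMulVec_mulVec, hvu]; simp [hvu]
    rw [sub_mulVec, dotProduct_sub, smul_mulVec, dotProduct_smul, h3] at h2
    simp at h2
    rw [← one_div]
    exact le_trans (by linarith) h1

end

/-- for `N = M_n ⊗ ℂ1_m ⊆ M_n ⊗ M_m` and every `p ∈ [1/2,∞]`,
`-log λ(M_n ⊗ M_m : N) = D_p(M_n ⊗ M_m‖N) = log (m · min n m)`, while
`D_{p,cb}(M_n ⊗ M_m‖N) = 2 log m`. -/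
theorem statement11 (n m : ℕ) (hn : 0 < n) (hm : 0 < m)
    (E : Mat (Fin n × Fin m) →ₗ[ℂ] Mat (Fin n × Fin m))
    (hE : IsCondExp (tensorSpan (Set.univ : Set (Mat (Fin n))) (scalarAlg (Fin m))) E)
    (p : ℝ≥0∞) (hp : 2⁻¹ ≤ p) :
    ((- Real.log (ppIndex E) : ℝ) : EReal)
        = DpRel p Set.univ (tensorSpan (Set.univ : Set (Mat (Fin n))) (scalarAlg (Fin m))) ∧
    DpRel p Set.univ (tensorSpan (Set.univ : Set (Mat (Fin n))) (scalarAlg (Fin m)))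
        = ((Real.log ((m : ℝ) * (min n m : ℕ)) : ℝ) : EReal) ∧
    DpCb p (tensorSpan (Set.univ : Set (Mat (Fin n))) (scalarAlg (Fin m)))
        = ((2 * Real.log (m : ℝ) : ℝ) : EReal) := by
  have : Nonempty (Fin m) := ⟨⟨0, hm⟩⟩
  have hmp : (0:ℝ) < m := by exact_mod_cast hm
  have hr : 0 < min n m := lt_min hn hm
  have hr' : (0:ℝ) < (min n m : ℕ) := by exact_mod_cast hr
  have hd : min n m = Fintype.card (Fin n) ∨ min n m = Fintype.card (Fin m) := by
    simp only [Fintype.card_fin]; exact min_choice n m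
  have hj : Function.Injective (Fin.castLE (min_le_left n m)) := Fin.castLE_injective _
  have hl : Function.Injective (Fin.castLE (min_le_right n m)) := Fin.castLE_injective _
  have hDp : DpRel p Set.univ (tensorSpan (Set.univ : Set (Mat (Fin n))) (scalarAlg (Fin m)))
      = ((Real.log ((m : ℝ) * (min n m : ℕ)) : ℝ) : EReal) := by
    rw [mem1]
    refine le_antisymm ?_ ?_
    · have := rel_upper (Equiv.refl (Fin n × Fin m)) (min n m) hr hd p hp
      rwa [Fintype.card_fin] at this
    · have := rel_lower (Equiv.refl (Fin n × Fin m)) hr _ _ hj hl p hp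
      rwa [Fintype.card_fin] at this
  refine ⟨?_, hDp, ?_⟩
  · rw [hDp]
    rw [mem1] at hE
    rw [ppIndex_eq E hE hr hd _ _ hj hl, Real.log_inv, neg_neg, Fintype.card_fin]
  · have hlog : 2 * Real.log (m:ℝ) = Real.log ((m:ℝ) * (m:ℕ)) := by
      rw [Real.log_mul hmp.ne' hmp.ne']; ring
    rw [hlog]
    refine le_antisymm (iSup_le fun k => ?_) (le_trans ?_ (le_iSup _ m))
    · rw [mem2]
      have := rel_upper (Equiv.prodAssoc (Fin k) (Fin n) (Fin m)).symm m hm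
        (Or.inr (Fintype.card_fin m).symm) p hp
      rwa [Fintype.card_fin] at this
    · rw [mem2]
      have := rel_lower (Equiv.prodAssoc (Fin m) (Fin n) (Fin m)).symm hm
        (fun t => (t, (⟨0, hn⟩ : Fin n))) id
        (fun a b h => (Prod.ext_iff.1 h).1) Function.injective_id p hp
      rwa [Fintype.card_fin] at this

end GJL
end
end

section
/- Let m = Σ_k n_k l_k and let N = ⊕_k (M_{n_k} ⊗ ℂ1_{l_k}) ⊆ M_m be the corresponding block-diagonal unital *-subalgebra. Then −log λ(M_m : N) = D(M_m‖N) = log Σ_k min(l_k, n_k) · l_k, and D_cb(M_m‖N) = log Σ_k l_k². -/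
open scoped ENNReal Classical ComplexOrder
open Matrix

noncomputable section

namespace GJL

variable {n : Type*} [Fintype n] [DecidableEq n]

/-- The block diagonal unital *-subalgebra `⊕_k (M_{n_k} ⊗ ℂ1_{l_k})` inside
`M_m`, `m = Σ_k n_k l_k`, realized on the index set `Σ k, Fin (n k) × Fin (l k)`:
a matrix lies in it iff it vanishes off the diagonal blocks and its `k`-th
diagonal block is `y_k ⊗ 1_{l_k}` for some `y_k ∈ M_{n_k}`. -/
def blockAlg (K : Type*) [Fintype K] [DecidableEq K] (nn ll : K → ℕ) :
    Set (Mat ((k : K) × (Fin (nn k) × Fin (ll k)))) :=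
  {X | ∃ y : (k : K) → Matrix (Fin (nn k)) (Fin (nn k)) ℂ,
    ∀ i j : (k : K) × (Fin (nn k) × Fin (ll k)),
      X i j = if h : i.1 = j.1 then
          y j.1 (Fin.cast (congrArg nn h) i.2.1) j.2.1 *
            (if Fin.cast (congrArg ll h) i.2.2 = j.2.2 then 1 else 0)
        else 0}

section analytic

open scoped MatrixOrder

lemma contOn_spec (A : Mat n) (f : ℝ → ℝ) : ContinuousOn f (spectrum ℝ A) :=
  (Matrix.finite_real_spectrum (A := A)).continuousOn f

lemma trace_mul_nonneg {A B : Mat n} (hA : A.PosSemidef) (hB : B.PosSemidef) :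
    0 ≤ traceR (A * B) := by
  obtain ⟨C, rfl⟩ := CStarAlgebra.nonneg_iff_eq_star_mul_self.mp hA.nonneg
  have h : (C * B * Cᴴ).PosSemidef := hB.mul_mul_conjTranspose_same C
  have h2 := h.trace_nonneg
  unfold traceR
  rw [star_eq_conjTranspose, Matrix.mul_assoc, Matrix.trace_mul_comm, ]
  exact (Complex.le_def.mp h2).1

lemma traceR_add (A B : Mat n) : traceR (A + B) = traceR A + traceR B := by simp [traceR]
lemma traceR_sub (A B : Mat n) : traceR (A - B) = traceR A - traceR B := by simp [traceR]
lemma traceR_smul (c : ℝ) (A : Mat n) : traceR (c • A) = c * traceR A := by simp [traceR]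

lemma trace_cfc_mono {ρ σ : Mat n} (hρ : ρ.PosSemidef) (hσ : σ.PosSemidef) (f g : ℝ → ℝ)
    (hfg : ∀ x, 0 ≤ x → f x ≤ g x) : traceR (ρ * cfc f σ) ≤ traceR (ρ * cfc g σ) := by
  have h : cfc f σ ≤ cfc g σ := by
    refine cfc_mono (fun x hx => hfg x ?_) (contOn_spec _ _) (contOn_spec _ _)
    exact spectrum_nonneg_of_nonneg hσ.nonneg hx
  have := trace_mul_nonneg hρ (Matrix.le_iff.mp h)
  rw [mul_sub, traceR_sub] at this
  linarith

lemma mul_cfc_ind {ρ σ : Mat n} (hσ : σ.PosSemidef) (h : suppLe ρ σ) :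
    ρ * cfc (fun x : ℝ => if x = 0 then (1:ℝ) else 0) σ = 0 := by
  have hsa : IsSelfAdjoint σ := hσ.1
  have h0 : σ * cfc (fun x : ℝ => if x = 0 then (1:ℝ) else 0) σ = 0 := by
    conv_lhs => enter [1]; rw [← cfc_id ℝ σ]
    rw [← cfc_mul _ _ _ (contOn_spec _ _) (contOn_spec _ _)]
    rw [← cfc_const_zero ℝ σ]
    congr 1
    ext x
    by_cases hx : x = 0 <;> simp [hx]
  ext i j
  have := h (fun i => cfc (fun x : ℝ => if x = 0 then (1:ℝ) else 0) σ i j) (by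
    ext k
    have := congrFun (congrFun h0 k) j
    simpa [Matrix.mul_apply, Matrix.mulVec, dotProduct] using this)
  have := congrFun this i
  simpa [Matrix.mul_apply, Matrix.mulVec, dotProduct] using this

lemma suppLe_of_le {ρ σ : Mat n} (hρ : ρ.PosSemidef) (S : ℝ)
    (h : (S • σ - ρ).PosSemidef) : suppLe ρ σ := by
  intro v hv
  rw [← hρ.dotProduct_mulVec_zero_iff]
  have h1 := h.dotProduct_mulVec_nonneg v
  have h2 := hρ.dotProduct_mulVec_nonneg v
  rw [Matrix.sub_mulVec, Matrix.smul_mulVec, hv] at h1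
  simp only [smul_zero, zero_sub, dotProduct_neg] at h1
  exact le_antisymm (by simpa using h1) h2

section
open scoped Matrix.Norms.L2Operator

lemma log_mono_shift {A B : Mat n} (hA : A.PosSemidef) (hB : B.PosSemidef) (h : A ≤ B)
    (ε : ℝ) (hε : 0 < ε) :
    cfc (fun x => Real.log (x + ε)) A ≤ cfc (fun x => Real.log (x + ε)) B := by
  have key : ∀ C : Mat n, C.PosSemidef →
      cfc (fun x => Real.log (x + ε)) C = CFC.log (C + algebraMap ℝ _ ε) := by
    intro C hC
    have hsa : IsSelfAdjoint C := hC.1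
    rw [CFC.log, cfc_comp' Real.log (fun x => x + ε) C
      ((((Matrix.finite_real_spectrum (A := C))).image _).continuousOn _) (contOn_spec _ _),
      cfc_add_const ε (fun x => x) C (contOn_spec _ _), cfc_id' ℝ C]
  rw [key A hA, key B hB]
  have hpos : IsStrictlyPositive (A + algebraMap ℝ (Mat n) ε) := by
    have : IsStrictlyPositive (algebraMap ℝ (Mat n) ε) := by
      exact isStrictlyPositive_algebraMap hε
    exact this.nonneg_add hA.nonneg
  exact CFC.log_le_log (by gcongr) hpos
end

lemma DU_le {ρ σ : Mat n} (hρ : IsDensity ρ) (hσ : σ.PosSemidef) (S : ℝ) (hS : 0 < S)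
    (h : (S • σ - ρ).PosSemidef) : DU ρ σ ≤ ((Real.log S : ℝ) : EReal) := by
  have hs := suppLe_of_le hρ.1 S h
  rw [DU, if_pos hs]
  norm_cast
  rw [traceR_sub, mlog, mlog]
  have hσsa : IsSelfAdjoint σ := hσ.1
  have hρ1 : traceR ρ = 1 := by simp [traceR, hρ.2]
  set K := traceR (ρ * cfc (fun x : ℝ => x⁻¹) σ) with hK
  have main : ∀ ε : ℝ, 0 < ε → traceR (ρ * cfc Real.log ρ) - traceR (ρ * cfc Real.log σ)
      ≤ Real.log S + ε * (K / S) := by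
    intro ε hε
    have h1 : traceR (ρ * cfc Real.log ρ) ≤ traceR (ρ * cfc (fun x => Real.log (x + ε)) ρ) := by
      have hρsa : IsSelfAdjoint ρ := hρ.1.1
      have e : ∀ f : ℝ → ℝ, ρ * cfc f ρ = 1 * cfc (fun x => x * f x) ρ := by
        intro f
        rw [cfc_mul _ _ _ (contOn_spec _ _) (contOn_spec _ _), cfc_id' ℝ ρ, one_mul]
      rw [e, e]
      refine trace_cfc_mono PosSemidef.one hρ.1 _ _ ?_
      intro x hx
      rcases hx.eq_or_lt with rfl | hx
      · simp
      · have := Real.log_le_log hx (by linarith : x ≤ x + ε)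
        exact mul_le_mul_of_nonneg_left this hx.le
    have hSσ : (S • σ).PosSemidef := hσ.smul hS.le
    have h2 : traceR (ρ * cfc (fun x => Real.log (x + ε)) ρ)
        ≤ traceR (ρ * cfc (fun x => Real.log (x + ε)) (S • σ)) := by
      have := trace_mul_nonneg hρ.1 (Matrix.le_iff.mp (log_mono_shift hρ.1 hSσ h ε hε))
      rw [mul_sub, traceR_sub] at this
      linarith
    have h3 : cfc (fun x => Real.log (x + ε)) (S • σ) = cfc (fun x => Real.log (S * x + ε)) σ := by
      rw [← cfc_smul_id (R := ℝ) S σ, ← cfc_comp' (fun x => Real.log (x + ε)) (fun x => S • x) σ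
        ((((Matrix.finite_real_spectrum (A := σ))).image _).continuousOn _) (contOn_spec _ _)]
      rfl
    set C := Real.log ε - Real.log S
    have h4 : traceR (ρ * cfc (fun x => Real.log (S * x + ε)) σ) ≤
        traceR (ρ * cfc (fun x => ((Real.log S + Real.log x) + (ε / S) * x⁻¹)
          + C * (if x = 0 then (1:ℝ) else 0)) σ) := by
      refine trace_cfc_mono hρ.1 hσ _ _ ?_
      intro x hx
      rcases hx.eq_or_lt with rfl | hx
      · simp [C]
      · simp only [hx.ne', if_false, mul_zero, add_zero]
        have e1 : S * x + ε = S * x * (1 + ε / S * x⁻¹) := by field_simp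
        have hp : 0 < ε / S * x⁻¹ := by positivity
        rw [e1, Real.log_mul (by positivity) (by positivity), Real.log_mul hS.ne' hx.ne']
        have := Real.log_le_sub_one_of_pos (show 0 < 1 + ε / S * x⁻¹ by positivity)
        linarith
    rw [cfc_add _ _ _ (contOn_spec _ _) (contOn_spec _ _),
      cfc_add _ _ _ (contOn_spec _ _) (contOn_spec _ _),
      cfc_const_add _ _ _ (contOn_spec _ _),
      cfc_const_mul _ _ _ (contOn_spec _ _), cfc_const_mul _ _ _ (contOn_spec _ _),
      mul_add, mul_add, mul_add, Matrix.mul_smul, Matrix.mul_smul, mul_cfc_ind hσ hs,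
      Algebra.algebraMap_eq_smul_one, Matrix.mul_smul, mul_one, traceR_add, traceR_add, traceR_add,
      traceR_smul, traceR_smul, traceR_smul, hρ1, ← hK] at h4
    have h5 : traceR (0 : Mat n) = 0 := by simp [traceR]
    rw [h5] at h4
    rw [h3] at h2
    have e6 : ε / S * K = ε * (K / S) := by ring
    linarith
  refine le_of_forall_pos_le_add fun δ hδ => ?_
  have hK1 : 0 < |K / S| + 1 := by positivity
  refine (main (δ / (|K / S| + 1)) (by positivity)).trans ?_
  gcongr
  calc δ / (|K / S| + 1) * (K / S) ≤ δ / (|K / S| + 1) * (|K / S| + 1) := by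
        gcongr; linarith [le_abs_self (K / S)]
    _ = δ := by field_simp

/-- Lower bound for a pure state. -/
lemma le_DU_pure (ψ : n → ℂ) (hψ : star ψ ⬝ᵥ ψ = 1) {σ : Mat n} (hσ : IsDensity σ) (S : ℝ)
    (hS : 0 < S) (h : S * traceR (vecMulVec ψ (star ψ) * σ) ≤ 1) :
    ((Real.log S : ℝ) : EReal) ≤ DU (vecMulVec ψ (star ψ)) σ := by
  rw [DU]
  split_ifs with hs
  swap; · exact le_top
  norm_cast
  set ρ := vecMulVec ψ (star ψ) with hρd
  have hρ : ρ.PosSemidef := posSemidef_vecMulVec_self_star ψ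
  have hρsa : IsSelfAdjoint ρ := hρ.1
  have hσsa : IsSelfAdjoint σ := hσ.1.1
  have hρ1 : traceR ρ = 1 := by
    simp only [traceR, hρd, trace_vecMulVec]
    rw [dotProduct_comm, hψ]; simp
  have hidem : ρ * ρ = ρ := by
    rw [hρd, vecMulVec_mul_vecMulVec, hψ, one_smul]
  have hlog : mlog ρ = 0 := by
    rw [mlog, ← cfc_const_zero ℝ ρ]
    refine cfc_congr ?_
    intro x hx
    have hp : IsIdempotentElem ρ := hidem
    have := hp.spectrum_subset ℝ hx
    rcases this with rfl | rfl <;> simp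
  rw [hlog, mul_zero, traceR_sub, mlog]
  have h0 : traceR (0 : Mat n) = 0 := by simp [traceR]
  set C := 1 + Real.log S
  have h4 : traceR (ρ * cfc Real.log σ) ≤
      traceR (ρ * cfc (fun x => (-(1 + Real.log S) + S * x) + C * (if x = 0 then (1:ℝ) else 0)) σ) := by
    refine trace_cfc_mono hρ hσ.1 _ _ ?_
    intro x hx
    rcases hx.eq_or_lt with rfl | hx
    · simp [C]
    · simp only [hx.ne', if_false, mul_zero, add_zero]
      have := Real.log_le_sub_one_of_pos (show 0 < S * x by positivity)
      rw [Real.log_mul hS.ne' hx.ne'] at this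
      linarith
  rw [cfc_add _ _ _ (contOn_spec _ _) (contOn_spec _ _),
    cfc_const_add _ _ _ (contOn_spec _ _),
    cfc_const_mul _ _ _ (contOn_spec _ _), cfc_const_mul _ _ _ (contOn_spec _ _), cfc_id' ℝ σ,
    mul_add, mul_add, Matrix.mul_smul, Matrix.mul_smul, mul_cfc_ind hσ.1 hs,
    Algebra.algebraMap_eq_smul_one, Matrix.mul_smul, mul_one, traceR_add, traceR_add,
    traceR_smul, traceR_smul, traceR_smul, hρ1] at h4
  rw [h0] at h4 ⊢
  linarith

end analytic

section rankineq

lemma cs_trace {β : Type*} [Fintype β] (Q X : Matrix β β ℂ) :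
    ‖(Q * X).trace‖ ^ 2 ≤ (∑ b, ∑ c, ‖Q b c‖ ^ 2) * (∑ b, ∑ c, ‖X b c‖ ^ 2) := by
  have h1 : (Q * X).trace = ∑ p : β × β, Q p.1 p.2 * X p.2 p.1 := by
    simp [Matrix.trace, Matrix.mul_apply, Fintype.sum_prod_type]
  have h2 : ‖(Q * X).trace‖ ≤ ∑ p : β × β, ‖Q p.1 p.2‖ * ‖X p.2 p.1‖ := by
    rw [h1]
    refine (norm_sum_le _ _).trans (le_of_eq ?_)
    simp
  have h3 := Finset.sum_mul_sq_le_sq_mul_sq Finset.univ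
    (fun p : β × β => ‖Q p.1 p.2‖) (fun p => ‖X p.2 p.1‖)
  calc _ ≤ _ := pow_le_pow_left₀ (norm_nonneg _) h2 2
    _ ≤ _ := h3
    _ = _ := by
      rw [Fintype.sum_prod_type, Fintype.sum_prod_type, Finset.sum_comm (f := fun b c => ‖X c b‖ ^ 2)]

lemma exists_proj {a b : ℕ} (A : Matrix (Fin b) (Fin a) ℂ) :
    ∃ Q : Matrix (Fin b) (Fin b) ℂ, Q * A = A ∧ ∑ i, ∑ j, ‖Q i j‖ ^ 2 ≤ (a : ℝ) := by
  have hH : (A * Aᴴ).IsHermitian := isHermitian_mul_conjTranspose_self A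
  set D : Matrix (Fin b) (Fin b) ℂ :=
    diagonal (fun i => if hH.eigenvalues i = 0 then (0:ℂ) else 1) with hD
  set U : Matrix (Fin b) (Fin b) ℂ := (hH.eigenvectorUnitary : Matrix (Fin b) (Fin b) ℂ) with hU
  have hUU : Uᴴ * U = 1 := Unitary.coe_star_mul_self hH.eigenvectorUnitary
  have hUU' : U * Uᴴ = 1 := Unitary.coe_mul_star_self hH.eigenvectorUnitary
  set L : Matrix (Fin b) (Fin b) ℂ := diagonal (fun i => (hH.eigenvalues i : ℂ)) with hL
  have hspec : A * Aᴴ = U * L * Uᴴ := by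
    have := hH.spectral_theorem
    rw [Unitary.conjStarAlgAut_apply] at this
    exact this
  have hDL : D * L = L := by
    rw [hD, hL, diagonal_mul_diagonal]
    congr 1; ext i
    by_cases h : hH.eigenvalues i = 0 <;> simp [h]
  have hDD : D * D = D := by
    rw [hD, diagonal_mul_diagonal]
    congr 1; ext i
    by_cases h : hH.eigenvalues i = 0 <;> simp [h]
  have hDh : Dᴴ = D := by
    rw [hD, diagonal_conjTranspose]
    congr 1; ext i
    by_cases h : hH.eigenvalues i = 0 <;> simp [h]
  refine ⟨U * D * Uᴴ, ?_, ?_⟩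
  · have h1 : (U * D * Uᴴ) * (A * Aᴴ) = A * Aᴴ := by
      rw [hspec]
      calc U * D * Uᴴ * (U * L * Uᴴ) = U * D * (Uᴴ * U) * L * Uᴴ := by simp only [Matrix.mul_assoc]
        _ = U * (D * L) * Uᴴ := by rw [hUU, mul_one]; simp only [Matrix.mul_assoc]
        _ = _ := by rw [hDL]
    have h2 : (U * D * Uᴴ - 1) * (A * Aᴴ) = 0 := by rw [sub_mul, h1, one_mul, sub_self]
    have h3 : (U * D * Uᴴ - 1) * A = 0 := (mul_self_mul_conjTranspose_eq_zero _ _).1 (by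
      simpa [Matrix.mul_assoc] using h2)
    rw [Matrix.sub_mul, Matrix.one_mul] at h3
    exact sub_eq_zero.1 h3
  · set Q := U * D * Uᴴ with hQ
    have hQQ : Q * Qᴴ = Q := by
      rw [hQ]
      simp only [conjTranspose_mul, conjTranspose_conjTranspose, hDh]
      calc U * D * Uᴴ * (U * (D * Uᴴ)) = U * D * (Uᴴ * U) * D * Uᴴ := by simp only [Matrix.mul_assoc]
        _ = U * (D * D) * Uᴴ := by rw [hUU, mul_one]; simp only [Matrix.mul_assoc]
        _ = _ := by rw [hDD]
    have htr : Q.trace = D.trace := by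
      rw [hQ, Matrix.trace_mul_comm, ← Matrix.mul_assoc, hUU, one_mul]
    have hcard : D.trace = ((A * Aᴴ).rank : ℂ) := by
      rw [hH.rank_eq_card_non_zero_eigs, Fintype.card_subtype, hD, trace_diagonal]
      rw [Finset.card_filter]
      push_cast
      refine Finset.sum_congr rfl fun i _ => ?_
      by_cases h : hH.eigenvalues i = 0 <;> simp [h]
    have hr : (A * Aᴴ).rank ≤ a := by
      refine (Matrix.rank_mul_le_left _ _).trans ?_
      simpa using A.rank_le_card_width
    have hs : ((∑ i, ∑ j, ‖Q i j‖ ^ 2 : ℝ) : ℂ) = (Q * Qᴴ).trace := by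
      simp only [Matrix.trace, Matrix.mul_apply, Matrix.diag_apply, conjTranspose_apply]
      push_cast
      refine Finset.sum_congr rfl fun i _ => Finset.sum_congr rfl fun j _ => ?_
      rw [← Complex.mul_conj']; rfl
    rw [hQQ, htr, hcard] at hs
    have hs' : (∑ i, ∑ j, ‖Q i j‖ ^ 2 : ℝ) = ((A * Aᴴ).rank : ℝ) := by exact_mod_cast hs
    rw [hs']
    exact_mod_cast hr

lemma rank_trace {a b : ℕ} (A : Matrix (Fin b) (Fin a) ℂ) (P : Matrix (Fin a) (Fin b) ℂ) :
    ‖(A * P).trace‖ ^ 2 ≤ (min (b : ℝ) (a : ℝ)) * ∑ i, ∑ j, ‖(A * P) i j‖ ^ 2 := by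
  have hn : 0 ≤ ∑ i, ∑ j, ‖(A * P) i j‖ ^ 2 := by positivity
  rcases min_choice (b : ℝ) (a : ℝ) with h | h
  · rw [h]
    have := cs_trace 1 (A * P)
    rw [one_mul] at this
    refine this.trans (le_of_eq ?_)
    congr 1
    simp [Matrix.one_apply, apply_ite]
  · rw [h]
    obtain ⟨Q, hQ, hQ2⟩ := exists_proj A
    have := cs_trace Q (A * P)
    rw [← Matrix.mul_assoc, hQ] at this
    exact this.trans (mul_le_mul_of_nonneg_right hQ2 hn)

end rankineq

section block

variable {K : Type*} [Fintype K] [DecidableEq K] {nn ll : K → ℕ}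

/-- Index type of the block algebra. -/
abbrev Ix (nn ll : K → ℕ) := (k : K) × (Fin (nn k) × Fin (ll k))

/-- The element of the block algebra with given components. -/
def mk (ll : K → ℕ) (y : (k : K) → Matrix (Fin (nn k)) (Fin (nn k)) ℂ) : Mat (Ix nn ll) :=
  Matrix.of fun i j => if h : i.1 = j.1 then
          y j.1 (Fin.cast (congrArg nn h) i.2.1) j.2.1 *
            (if Fin.cast (congrArg ll h) i.2.2 = j.2.2 then 1 else 0)
        else 0

lemma mem_blockAlg (X : Mat (Ix nn ll)) : X ∈ blockAlg K nn ll ↔ ∃ y, X = mk ll y := by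
  constructor
  · rintro ⟨y, hy⟩
    exact ⟨y, by ext i j; exact hy i j⟩
  · rintro ⟨y, rfl⟩
    exact ⟨y, fun i j => rfl⟩

lemma mk_same (y : (k : K) → Matrix (Fin (nn k)) (Fin (nn k)) ℂ) (k : K) (a a' : Fin (nn k))
    (b b' : Fin (ll k)) :
    mk ll y ⟨k, a, b⟩ ⟨k, a', b'⟩ = y k a a' * (if b = b' then 1 else 0) := by
  simp [mk]

lemma mk_ne (y : (k : K) → Matrix (Fin (nn k)) (Fin (nn k)) ℂ) {k k' : K} (h : k ≠ k')
    (p : Fin (nn k) × Fin (ll k)) (p' : Fin (nn k') × Fin (ll k')) :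
    mk ll y ⟨k, p⟩ ⟨k', p'⟩ = 0 := by
  simp [mk, h]

lemma mk_sub (y z : (k : K) → Matrix (Fin (nn k)) (Fin (nn k)) ℂ) :
    mk ll y - mk ll z = mk ll (y - z) := by
  ext ⟨k, a, b⟩ ⟨k', a', b'⟩
  by_cases h : k = k'
  · subst h; simp only [Matrix.sub_apply, mk_same, Pi.sub_apply, sub_mul]
  · simp [mk_ne _ h]

lemma mk_conj (y : (k : K) → Matrix (Fin (nn k)) (Fin (nn k)) ℂ) :
    (mk ll y)ᴴ = mk ll (fun k => (y k)ᴴ) := by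
  ext ⟨k, a, b⟩ ⟨k', a', b'⟩
  by_cases h : k = k'
  · subst h
    simp only [conjTranspose_apply, mk_same]
    by_cases hb : b = b'
    · simp [hb]
    · simp [hb, Ne.symm hb]
  · simp [mk_ne _ h, mk_ne _ (Ne.symm h)]

lemma sum_mk (g : Ix nn ll → Ix nn ll → ℂ) (y : (k : K) → Matrix (Fin (nn k)) (Fin (nn k)) ℂ) :
    ∑ i, ∑ j, g i j * mk ll y i j =
      ∑ k, ∑ a, ∑ a', ∑ b, g ⟨k, a, b⟩ ⟨k, a', b⟩ * y k a a' := by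
  rw [Fintype.sum_sigma]
  refine Finset.sum_congr rfl fun k _ => ?_
  rw [Fintype.sum_prod_type]
  refine Finset.sum_congr rfl fun a _ => ?_
  rw [Finset.sum_comm]
  rw [Fintype.sum_sigma, Finset.sum_eq_single k]
  · rw [Fintype.sum_prod_type]
    refine Finset.sum_congr rfl fun a' _ => ?_
    refine Finset.sum_congr rfl fun b _ => ?_
    simp [mk_same]
  · intro k' _ hk
    refine Finset.sum_eq_zero fun p _ => Finset.sum_eq_zero fun q _ => ?_
    rw [mk_ne _ (Ne.symm hk), mul_zero]
  · simp

/-- The explicit conditional expectation. -/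
def FF (nn ll : K → ℕ) : Mat (Ix nn ll) →ₗ[ℂ] Mat (Ix nn ll) where
  toFun X := mk ll fun k => Matrix.of fun a a' => (ll k : ℂ)⁻¹ * ∑ b, X ⟨k, a, b⟩ ⟨k, a', b⟩
  map_add' X Y := by
    ext ⟨k, a, b⟩ ⟨k', a', b'⟩
    by_cases h : k = k'
    · subst h; simp only [Matrix.add_apply, of_apply, mk_same, Finset.sum_add_distrib, mul_add, add_mul]
    · simp [mk_ne _ h]
  map_smul' c X := by
    ext ⟨k, a, b⟩ ⟨k', a', b'⟩
    by_cases h : k = k'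
    · subst h; simp only [mk_same, of_apply, Matrix.smul_apply, smul_eq_mul, ← Finset.mul_sum,
        RingHom.id_apply]; ring
    · simp [mk_ne _ h]

lemma FF_apply (X : Mat (Ix nn ll)) : FF nn ll X =
    mk ll fun k => Matrix.of fun a a' => (ll k : ℂ)⁻¹ * ∑ b, X ⟨k, a, b⟩ ⟨k, a', b⟩ := rfl

lemma FF_mem (X : Mat (Ix nn ll)) : FF nn ll X ∈ blockAlg K nn ll :=
  (mem_blockAlg _).2 ⟨_, FF_apply X⟩

lemma trace_conj_mul {ι : Type*} [Fintype ι] (A B : Matrix ι ι ℂ) :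
    (Aᴴ * B).trace = ∑ i, ∑ j, star (A i j) * B i j := by
  simp only [Matrix.trace, Matrix.mul_apply, Matrix.diag_apply, conjTranspose_apply]
  rw [Finset.sum_comm]

lemma FF_orth (hll : ∀ k, 0 < ll k) (X Y : Mat (Ix nn ll)) (hY : Y ∈ blockAlg K nn ll) :
    ((FF nn ll X)ᴴ * Y).trace = (Xᴴ * Y).trace := by
  obtain ⟨y, rfl⟩ := (mem_blockAlg Y).1 hY
  rw [trace_conj_mul, trace_conj_mul, sum_mk, sum_mk]
  refine Finset.sum_congr rfl fun k _ => Finset.sum_congr rfl fun a _ =>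
    Finset.sum_congr rfl fun a' _ => ?_
  have : (ll k : ℂ) ≠ 0 := by exact_mod_cast (hll k).ne'
  rw [FF_apply]
  simp only [mk_same, of_apply, if_true, mul_one, Finset.sum_const, Finset.card_univ,
    Fintype.card_fin, nsmul_eq_mul, star_mul', star_sum, ← Finset.sum_mul, star_inv₀, star_natCast]
  field_simp

lemma FF_trace (hll : ∀ k, 0 < ll k) (X : Mat (Ix nn ll)) : (FF nn ll X).trace = X.trace := by
  rw [FF_apply]
  simp only [Matrix.trace, Matrix.diag_apply, Fintype.sum_sigma, Fintype.sum_prod_type, mk_same,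
    of_apply, if_true, mul_one, Finset.sum_const, Finset.card_univ,
    Fintype.card_fin, nsmul_eq_mul]
  refine Finset.sum_congr rfl fun k _ => Finset.sum_congr rfl fun a _ => ?_
  have : (ll k : ℂ) ≠ 0 := by exact_mod_cast (hll k).ne'
  field_simp

lemma condExp_eq_s12 (hll : ∀ k, 0 < ll k) (E : Mat (Ix nn ll) →ₗ[ℂ] Mat (Ix nn ll))
    (hE : IsCondExp (blockAlg K nn ll) E) (X : Mat (Ix nn ll)) : E X = FF nn ll X := by
  obtain ⟨y, hy⟩ := (mem_blockAlg _).1 (hE.1 X)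
  have hmem : E X - FF nn ll X ∈ blockAlg K nn ll := by
    rw [hy, FF_apply, mk_sub]
    exact (mem_blockAlg _).2 ⟨_, rfl⟩
  have h : ((E X - FF nn ll X)ᴴ * (E X - FF nn ll X)).trace = 0 := by
    conv_lhs => rw [conjTranspose_sub, Matrix.sub_mul, Matrix.trace_sub]
    rw [hE.2.2 X _ hmem, FF_orth hll X _ hmem, sub_self]
  exact sub_eq_zero.1 (trace_conjTranspose_mul_self_eq_zero_iff.1 h)

lemma sum_comm4 {α β : Type*} [Fintype α] [Fintype β] (f : α → α → β → β → ℂ) :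
    ∑ a, ∑ a', ∑ c, ∑ b, f a a' c b = ∑ b, ∑ c, ∑ a, ∑ a', f a a' c b := by
  calc _ = ∑ a, ∑ c, ∑ a', ∑ b, f a a' c b := Finset.sum_congr rfl fun a _ => Finset.sum_comm
    _ = ∑ c, ∑ a, ∑ a', ∑ b, f a a' c b := Finset.sum_comm
    _ = ∑ c, ∑ a, ∑ b, ∑ a', f a a' c b := Finset.sum_congr rfl fun c _ =>
      Finset.sum_congr rfl fun a _ => Finset.sum_comm
    _ = ∑ c, ∑ b, ∑ a, ∑ a', f a a' c b := Finset.sum_congr rfl fun c _ => Finset.sum_comm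
    _ = _ := Finset.sum_comm

/-- The index sum. -/
def SS (nn ll : K → ℕ) : ℝ := ∑ k, (min (ll k) (nn k) : ℝ) * (ll k : ℝ)

lemma quad_eq {ι : Type*} [Fintype ι] (M : Matrix ι ι ℂ) (v : ι → ℂ) :
    star v ⬝ᵥ (M *ᵥ v) = ∑ i, ∑ j, (star (v i) * v j) * M i j := by
  simp only [dotProduct, mulVec, Finset.mul_sum, Pi.star_apply]
  refine Finset.sum_congr rfl fun i _ => Finset.sum_congr rfl fun j _ => by ring

lemma pp_rank_one (hnn : ∀ k, 0 < nn k) (hll : ∀ k, 0 < ll k) (w : Ix nn ll → ℂ) :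
    (SS nn ll • FF nn ll (vecMulVec (star w) w) - vecMulVec (star w) w).PosSemidef := by
  have hw : (vecMulVec (star w) w).IsHermitian := by
    have := (posSemidef_vecMulVec_self_star (star w)).1
    simpa using this
  refine PosSemidef.of_dotProduct_mulVec_nonneg ?_ ?_
  · refine IsHermitian.sub ?_ hw
    have : (FF nn ll (vecMulVec (star w) w)).IsHermitian := by
      rw [IsHermitian, FF_apply, mk_conj]
      congr 1
      ext k a a'
      simp [vecMulVec_apply, mul_comm]
    rw [IsHermitian, conjTranspose_smul, this.eq]; simp
  · intro v
    let A : (k : K) → Matrix (Fin (ll k)) (Fin (nn k)) ℂ := fun k => of fun b a => w ⟨k, a, b⟩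
    let P : (k : K) → Matrix (Fin (nn k)) (Fin (ll k)) ℂ := fun k => of fun a b => v ⟨k, a, b⟩
    have h1 : star v ⬝ᵥ (FF nn ll (vecMulVec (star w) w) *ᵥ v) =
        ((∑ k, (ll k : ℝ)⁻¹ * ∑ b, ∑ c, ‖(A k * P k) b c‖ ^ 2 : ℝ) : ℂ) := by
      rw [quad_eq, FF_apply, sum_mk]
      push_cast
      refine Finset.sum_congr rfl fun k _ => ?_
      simp only [← Complex.conj_mul', Matrix.mul_apply, map_sum, Finset.sum_mul_sum]
      rw [← sum_comm4 (fun a a' c b => (starRingEnd ℂ) (A k b a * P k a c) * (A k b a' * P k a' c))]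
      simp only [Finset.mul_sum, of_apply]
      refine Finset.sum_congr rfl fun a _ => Finset.sum_congr rfl fun a' _ =>
        Finset.sum_congr rfl fun c _ => Finset.sum_congr rfl fun b _ => ?_
      simp only [A, P, of_apply, vecMulVec_apply, Pi.star_apply, map_mul, RCLike.star_def]
      ring
    have h2 : star v ⬝ᵥ (vecMulVec (star w) w *ᵥ v) =
        ((‖∑ k, (A k * P k).trace‖ ^ 2 : ℝ) : ℂ) := by
      have e : ∑ k, (A k * P k).trace = w ⬝ᵥ v := by
        simp only [dotProduct, Fintype.sum_sigma, Fintype.sum_prod_type, Matrix.trace,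
          Matrix.diag_apply, Matrix.mul_apply, A, P, of_apply]
        exact Finset.sum_congr rfl fun k _ => Finset.sum_comm
      rw [e]
      push_cast
      rw [← Complex.conj_mul', vecMulVec_mulVec]
      simp only [dotProduct_smul, MulOpposite.smul_eq_mul_unop, MulOpposite.unop_op]
      congr 1
      simp only [dotProduct, map_sum, map_mul, Pi.star_apply, RCLike.star_def]
      exact Finset.sum_congr rfl fun i _ => mul_comm _ _
    rw [sub_mulVec, smul_mulVec, dotProduct_sub, dotProduct_smul, h1, h2]
    rw [Complex.real_smul, ← Complex.ofReal_mul, ← Complex.ofReal_sub]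
    norm_cast
    rw [sub_nonneg]
    have hd : ∀ k, 0 < (min (ll k) (nn k) : ℝ) * (ll k : ℝ) := fun k => by
      have h1 : (0 : ℝ) < ll k := by exact_mod_cast hll k
      have h2 : (0 : ℝ) < nn k := by exact_mod_cast hnn k
      positivity
    have hsed := Finset.sq_sum_div_le_sum_sq_div Finset.univ (fun k => ‖(A k * P k).trace‖)
      (g := fun k => (min (ll k) (nn k) : ℝ) * (ll k : ℝ)) (fun k _ => hd k)
    have hS0 : 0 ≤ SS nn ll := Finset.sum_nonneg fun k _ => (hd k).le
    have hb : ∀ k, ‖(A k * P k).trace‖ ^ 2 / ((min (ll k) (nn k) : ℝ) * (ll k : ℝ)) ≤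
        (ll k : ℝ)⁻¹ * ∑ b, ∑ c, ‖(A k * P k) b c‖ ^ 2 := by
      intro k
      rw [div_le_iff₀ (hd k)]
      have h1 : (0 : ℝ) < ll k := by exact_mod_cast hll k
      calc _ ≤ _ := rank_trace (A k) (P k)
        _ = _ := by field_simp
    have hfin := hsed.trans (Finset.sum_le_sum fun k _ => hb k)
    have hn : ‖∑ k, (A k * P k).trace‖ ^ 2 ≤ (∑ k, ‖(A k * P k).trace‖) ^ 2 :=
      pow_le_pow_left₀ (norm_nonneg _) (norm_sum_le _ _) 2
    refine hn.trans ?_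
    rcases hS0.eq_or_lt with h0 | h0
    · have : IsEmpty K := by
        by_contra hne
        rw [not_isEmpty_iff] at hne
        have : 0 < SS nn ll := Finset.sum_pos (fun k _ => hd k) Finset.univ_nonempty
        linarith
      simp
    · change _ / SS nn ll ≤ _ at hfin
      rw [div_le_iff₀ h0] at hfin
      linarith

lemma pp_ineq (hnn : ∀ k, 0 < nn k) (hll : ∀ k, 0 < ll k) (X : Mat (Ix nn ll))
    (hX : X.PosSemidef) : (SS nn ll • FF nn ll X - X).PosSemidef := by
  open scoped MatrixOrder in
  obtain ⟨B, rfl⟩ := CStarAlgebra.nonneg_iff_eq_star_mul_self.mp hX.nonneg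
  have : star B * B = ∑ r, vecMulVec (star (B r)) (B r) := by
    ext i j
    simp [Matrix.mul_apply, Matrix.sum_apply, vecMulVec_apply, star_eq_conjTranspose]
  rw [this, map_sum, Finset.smul_sum, ← Finset.sum_sub_distrib]
  exact posSemidef_sum _ fun r _ => pp_rank_one hnn hll (B r)

lemma SS_pos [Nonempty K] (hnn : ∀ k, 0 < nn k) (hll : ∀ k, 0 < ll k) : 0 < SS nn ll := by
  refine Finset.sum_pos (fun k _ => ?_) Finset.univ_nonempty
  have h1 : (0 : ℝ) < ll k := by exact_mod_cast hll k
  have h2 : (0 : ℝ) < nn k := by exact_mod_cast hnn k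
  positivity

lemma FF_psd [Nonempty K] (hnn : ∀ k, 0 < nn k) (hll : ∀ k, 0 < ll k) (X : Mat (Ix nn ll))
    (hX : X.PosSemidef) : (FF nn ll X).PosSemidef := by
  have h := (pp_ineq hnn hll X hX).add hX
  rw [sub_add_cancel] at h
  have hS := SS_pos hnn hll
  have := h.smul (inv_pos.2 hS).le
  rwa [smul_smul, inv_mul_cancel₀ hS.ne', one_smul] at this

/-- The extremal vector. -/
def psi (nn ll : K → ℕ) : Ix nn ll → ℂ := fun i =>
  if (i.2.1 : ℕ) = (i.2.2 : ℕ) then (Real.sqrt (ll i.1 / SS nn ll) : ℂ) else 0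

lemma sum_ind (a l : ℕ) : ∑ b : Fin l, (if a = (b : ℕ) then (1:ℝ) else 0) = if a < l then 1 else 0 := by
  by_cases h : a < l
  · rw [Finset.sum_eq_single ⟨a, h⟩]
    · simp [h]
    · intro b _ hb
      rw [if_neg]
      rintro rfl
      exact hb rfl
    · simp
  · rw [if_neg h]
    refine Finset.sum_eq_zero fun b _ => if_neg ?_
    have := b.2
    omega

lemma sum_ind2 (m l : ℕ) :
    ∑ a : Fin m, ∑ b : Fin l, (if (a : ℕ) = (b : ℕ) then (1:ℝ) else 0) = min (l : ℝ) (m : ℝ) := by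
  simp only [sum_ind]
  rw [Fin.sum_univ_eq_sum_range (fun a => if a < l then (1:ℝ) else 0) m]
  rw [← Finset.sum_filter, Finset.sum_const, nsmul_eq_mul, mul_one]
  have : (Finset.range m).filter (· < l) = Finset.range (min l m) := by
    ext x; simp [and_comm]
  rw [this, Finset.card_range]; simp

lemma psi_mul (S : ℝ) (hS : 0 < S) (hSS : SS nn ll = S) (k : K) (a a' : Fin (nn k)) (b : Fin (ll k)) :
    psi nn ll ⟨k, a', b⟩ * star (psi nn ll ⟨k, a, b⟩) =
      if (a : ℕ) = b then (if a' = a then ((ll k / S : ℝ) : ℂ) else 0) else 0 := by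
  have hs : (Real.sqrt (ll k / S) : ℂ) * (Real.sqrt (ll k / S) : ℂ) = ((ll k / S : ℝ) : ℂ) := by
    rw [← Complex.ofReal_mul, Real.mul_self_sqrt (by positivity)]
  simp only [psi, hSS]
  by_cases h : (a : ℕ) = b
  · by_cases h' : a' = a
    · subst h'; simp only [h, if_true]
      rw [← hs]
      simp
    · have : (a' : ℕ) ≠ b := fun h2 => h' (Fin.ext (h2.trans h.symm))
      simp [h', this]
  · simp [h]

lemma psi_norm [Nonempty K] (hnn : ∀ k, 0 < nn k) (hll : ∀ k, 0 < ll k) :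
    star (psi nn ll) ⬝ᵥ psi nn ll = 1 := by
  have hS := SS_pos hnn hll
  rw [dotProduct_comm]
  simp only [dotProduct, Fintype.sum_sigma, Fintype.sum_prod_type, Pi.star_apply]
  simp only [psi_mul (SS nn ll) hS rfl, if_true]
  have : ((∑ k, (ll k / SS nn ll) *
      (∑ a : Fin (nn k), ∑ b : Fin (ll k), (if (a : ℕ) = (b : ℕ) then (1:ℝ) else 0)) : ℝ) : ℂ) = 1 := by
    simp only [sum_ind2]
    norm_cast
    rw [← div_self hS.ne']
    conv_rhs => enter [1]; rw [SS]
    rw [Finset.sum_div]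
    exact Finset.sum_congr rfl fun k _ => by push_cast; ring
  rw [← this]
  push_cast
  refine Finset.sum_congr rfl fun k _ => ?_
  simp only [Finset.mul_sum]
  refine Finset.sum_congr rfl fun a _ => Finset.sum_congr rfl fun b _ => ?_
  split_ifs <;> simp

lemma psi_bound [Nonempty K] (hnn : ∀ k, 0 < nn k) (hll : ∀ k, 0 < ll k) (σ : Mat (Ix nn ll))
    (hσ : σ ∈ blockAlg K nn ll) (hp : IsDensity σ) :
    SS nn ll * traceR (vecMulVec (psi nn ll) (star (psi nn ll)) * σ) ≤ 1 := by
  have hS := SS_pos hnn hll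
  obtain ⟨y, rfl⟩ := (mem_blockAlg σ).1 hσ
  have hpos : ∀ k a, 0 ≤ (y k a a).re := by
    intro k a
    have := hp.1.diag_nonneg (i := ⟨k, a, ⟨0, hll k⟩⟩)
    rw [mk_same] at this
    simpa using (Complex.le_def.mp this).1
  have htr : ∑ k, ∑ a, (ll k : ℝ) * (y k a a).re = 1 := by
    have := congrArg Complex.re hp.2
    simpa [Matrix.trace, Fintype.sum_sigma, Fintype.sum_prod_type, mk_same] using this
  have h1 : (vecMulVec (psi nn ll) (star (psi nn ll)) * mk ll y).trace =
      ∑ k, ∑ a : Fin (nn k), ∑ b : Fin (ll k), (if (a : ℕ) = b then ((ll k / SS nn ll : ℝ) : ℂ) * y k a a else 0) := by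
    have e : (vecMulVec (psi nn ll) (star (psi nn ll)) * mk ll y).trace =
        ∑ i, ∑ j, (psi nn ll j * star (psi nn ll i)) * mk ll y i j := by
      simp only [Matrix.trace, Matrix.diag_apply, Matrix.mul_apply, vecMulVec_apply, Pi.star_apply]
      exact Finset.sum_comm
    rw [e, sum_mk]
    refine Finset.sum_congr rfl fun k _ => Finset.sum_congr rfl fun a _ => ?_
    rw [Finset.sum_comm]
    refine Finset.sum_congr rfl fun b _ => ?_
    simp only [psi_mul (SS nn ll) hS rfl]
    by_cases h : (a : ℕ) = b
    · simp [h]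
    · simp [h]
  rw [traceR, h1, ← htr]
  simp only [Complex.re_sum, Finset.mul_sum]
  refine Finset.sum_le_sum fun k _ => Finset.sum_le_sum fun a _ => ?_
  have h2 : ∀ b : Fin (ll k), SS nn ll *
      (if (a : ℕ) = b then ((ll k / SS nn ll : ℝ) : ℂ) * y k a a else 0).re
      = ((ll k : ℝ) * (y k a a).re) * (if (a : ℕ) = b then (1:ℝ) else 0) := by
    intro b
    split_ifs
    · rw [Complex.re_ofReal_mul]; field_simp
    · simp
  simp only [h2]
  rw [← Finset.mul_sum, sum_ind]
  have := mul_nonneg (Nat.cast_nonneg (α := ℝ) (ll k)) (hpos k a)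
  split_ifs <;> simp [this]

lemma psi_density [Nonempty K] (hnn : ∀ k, 0 < nn k) (hll : ∀ k, 0 < ll k) :
    IsDensity (vecMulVec (psi nn ll) (star (psi nn ll))) := by
  refine ⟨posSemidef_vecMulVec_self_star _, ?_⟩
  rw [trace_vecMulVec, dotProduct_comm, psi_norm hnn hll]

lemma Dp_one {n : Type*} [Fintype n] [DecidableEq n] (ρ σ : Mat n) : Dp 1 ρ σ = DU ρ σ := by
  simp [Dp]

lemma DpRel_block [Nonempty K] (hnn : ∀ k, 0 < nn k) (hll : ∀ k, 0 < ll k) :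
    DpRel 1 Set.univ (blockAlg K nn ll) = ((Real.log (SS nn ll) : ℝ) : EReal) := by
  have hS := SS_pos hnn hll
  apply le_antisymm
  · refine iSup₂_le fun ρ hρ => ?_
    have hρ := hρ.2
    have hσ := FF_psd hnn hll ρ hρ.1
    refine (iInf₂_le (FF nn ll ρ) ⟨FF_mem ρ, hσ, by rw [FF_trace hll, hρ.2]⟩).trans ?_
    · rw [Dp_one]
      exact DU_le hρ hσ _ hS (pp_ineq hnn hll ρ hρ.1)
  · refine le_trans ?_ (le_iSup₂ (vecMulVec (psi nn ll) (star (psi nn ll)))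
      ⟨Set.mem_univ _, psi_density hnn hll⟩)
    refine le_iInf₂ fun σ hσ => ?_
    rw [Dp_one]
    exact le_DU_pure _ (psi_norm hnn hll) hσ.2 _ hS (psi_bound hnn hll σ hσ.1 hσ.2)

lemma ppIndex_eq_s12 [Nonempty K] (hnn : ∀ k, 0 < nn k) (hll : ∀ k, 0 < ll k)
    (E : Mat (Ix nn ll) →ₗ[ℂ] Mat (Ix nn ll))
    (hE : IsCondExp (blockAlg K nn ll) E) : ppIndex E = (SS nn ll)⁻¹ := by
  have hS := SS_pos hnn hll
  have hEF : ∀ X, E X = FF nn ll X := condExp_eq_s12 hll E hE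
  refine IsGreatest.csSup_eq ⟨⟨(inv_pos.2 hS).le, fun X hX => ?_⟩, ?_⟩
  · have := (pp_ineq hnn hll X hX).smul (inv_pos.2 hS).le
    rwa [smul_sub, smul_smul, inv_mul_cancel₀ hS.ne', one_smul, ← hEF] at this
  · rintro c ⟨hc0, hc⟩
    set ρ := vecMulVec (psi nn ll) (star (psi nn ll)) with hρd
    have hρ : IsDensity ρ := psi_density hnn hll
    have h1 := trace_mul_nonneg hρ.1 (hc ρ hρ.1)
    rw [hEF, mul_sub, Matrix.mul_smul, traceR_sub, traceR_smul] at h1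
    have h2 : ρ * ρ = ρ := by
      rw [hρd, vecMulVec_mul_vecMulVec, psi_norm hnn hll, one_smul]
    have h3 := psi_bound hnn hll (FF nn ll ρ) (FF_mem ρ)
      ⟨FF_psd hnn hll ρ hρ.1, by rw [FF_trace hll, hρ.2]⟩
    rw [h2] at h1
    have h4 : traceR ρ = 1 := by simp [traceR, hρ.2]
    rw [h4] at h1
    rw [← one_div, le_div_iff₀ hS]
    rw [← hρd] at h3
    nlinarith

end block

section cb

open scoped Kronecker

lemma cfc_submatrix {m n : Type*} [Fintype m] [DecidableEq m] [Fintype n] [DecidableEq n]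
    (e : m ≃ n) (f : ℝ → ℝ) (A : Mat n) (hA : A.IsHermitian) :
    cfc f (A.submatrix e e) = (cfc f A).submatrix e e := by
  let φ : Mat n →⋆ₐ[ℝ] Mat m :=
    { toFun := fun X => X.submatrix e e
      map_one' := by simp
      map_mul' := fun X Y => by rw [Matrix.submatrix_mul_equiv]
      map_zero' := rfl
      map_add' := fun X Y => rfl
      commutes' := fun r => by
        ext i j
        simp [Matrix.algebraMap_matrix_apply]
      map_star' := fun X => rfl }
  have hc : Continuous φ := by
    change Continuous fun X : Mat n => X.submatrix e e
    fun_prop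
  have h := StarAlgHom.map_cfc φ f A (contOn_spec A f) hc hA (hA.submatrix e)
  exact h.symm

lemma trace_submatrix' {m n : Type*} [Fintype m] [DecidableEq m] [Fintype n] [DecidableEq n]
    (e : m ≃ n) (A : Mat n) : (A.submatrix e e).trace = A.trace := by
  simp only [Matrix.trace, Matrix.diag_apply, submatrix_apply]
  exact Equiv.sum_comp e (fun i => A i i)

lemma IsDensity.submatrix {m n : Type*} [Fintype m] [DecidableEq m] [Fintype n] [DecidableEq n]
    (e : m ≃ n) {A : Mat n} (h : IsDensity A) : IsDensity (A.submatrix e e) :=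
  ⟨h.1.submatrix e, by rw [trace_submatrix', h.2]⟩

lemma suppLe.submatrix {m n : Type*} [Fintype m] [DecidableEq m] [Fintype n] [DecidableEq n]
    (e : m ≃ n) {ρ σ : Mat n} (h : suppLe ρ σ) : suppLe (ρ.submatrix e e) (σ.submatrix e e) := by
  intro v hv
  rw [Matrix.submatrix_mulVec_equiv] at hv ⊢
  have : σ.mulVec (v ∘ e.symm) = 0 := by
    ext i
    have := congrFun hv (e.symm i)
    simpa using this
  rw [h _ this]
  rfl

lemma DU_submatrix {m n : Type*} [Fintype m] [DecidableEq m] [Fintype n] [DecidableEq n]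
    (e : m ≃ n) {ρ σ : Mat n} (hρ : IsDensity ρ) (hσ : IsDensity σ) :
    DU (ρ.submatrix e e) (σ.submatrix e e) = DU ρ σ := by
  have hs : suppLe (ρ.submatrix e e) (σ.submatrix e e) ↔ suppLe ρ σ := by
    refine ⟨fun h => ?_, fun h => h.submatrix e⟩
    have := h.submatrix e.symm
    simpa [Matrix.submatrix_submatrix] using this
  have ht : traceR (ρ.submatrix e e * mlog (ρ.submatrix e e)
      - ρ.submatrix e e * mlog (σ.submatrix e e)) = traceR (ρ * mlog ρ - ρ * mlog σ) := by
    rw [mlog, mlog, cfc_submatrix e _ _ hρ.1.1, cfc_submatrix e _ _ hσ.1.1,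
      Matrix.submatrix_mul_equiv, Matrix.submatrix_mul_equiv, traceR_sub, traceR_sub]
    simp only [traceR, trace_submatrix', mlog]
  unfold DU
  simp only [hs, ht]

lemma DpRel_submatrix_le {m n : Type*} [Fintype m] [DecidableEq m] [Fintype n] [DecidableEq n]
    (e : m ≃ n) (S : Set (Mat m)) (T : Set (Mat n)) (h : ∀ X : Mat m, X ∈ S →
      X.submatrix e.symm e.symm ∈ T) :
    DpRel 1 Set.univ T ≤ DpRel 1 Set.univ S := by
  refine iSup₂_le fun ρ hρ => ?_
  refine le_trans ?_ (le_iSup₂ (ρ.submatrix e e) ⟨Set.mem_univ _, hρ.2.submatrix e⟩)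
  refine le_iInf₂ fun σ hσ => ?_
  refine (iInf₂_le (σ.submatrix e.symm e.symm) ⟨h σ hσ.1, hσ.2.submatrix e.symm⟩).trans ?_
  rw [Dp_one, Dp_one, ← DU_submatrix e hρ.2 (hσ.2.submatrix e.symm)]
  simp [Matrix.submatrix_submatrix]

variable {K : Type*} [Fintype K] [DecidableEq K] {nn ll : K → ℕ}

/-- Reindexing of the amplified block algebra. -/
def ee (q : ℕ) (nn ll : K → ℕ) : Fin q × Ix nn ll ≃ Ix (fun k => q * nn k) ll where
  toFun p := ⟨p.2.1, finProdFinEquiv (p.1, p.2.2.1), p.2.2.2⟩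
  invFun i := ((finProdFinEquiv.symm i.2.1).1, ⟨i.1, (finProdFinEquiv.symm i.2.1).2, i.2.2⟩)
  left_inv p := by simp
  right_inv i := by
    obtain ⟨k, c, b⟩ := i
    simp only [Prod.mk.eta, Equiv.apply_symm_apply]

lemma ee_apply (q : ℕ) (s : Fin q) (k : K) (a : Fin (nn k)) (b : Fin (ll k)) :
    ee q nn ll (s, ⟨k, a, b⟩) = ⟨k, finProdFinEquiv (s, a), b⟩ := rfl

lemma mem_tensor (q : ℕ) (Z : Mat (Fin q × Ix nn ll)) :
    Z ∈ tensorSpan (Set.univ : Set (Mat (Fin q))) (blockAlg K nn ll) ↔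
      ∃ Y, Z = (mk (nn := fun k => q * nn k) ll Y).submatrix (ee q nn ll) (ee q nn ll) := by
  constructor
  · intro hZ
    change Z ∈ Submodule.span ℂ _ at hZ
    induction hZ using Submodule.span_induction with
    | mem z hz =>
      obtain ⟨x, -, y, hy, rfl⟩ := hz
      obtain ⟨y, rfl⟩ := (mem_blockAlg y).1 hy
      refine ⟨fun k => of fun c c' => x (finProdFinEquiv.symm c).1 (finProdFinEquiv.symm c').1 *
        y k (finProdFinEquiv.symm c).2 (finProdFinEquiv.symm c').2, ?_⟩
      ext ⟨s, k, a, b⟩ ⟨t, k', a', b'⟩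
      simp only [kroneckerMap_apply, submatrix_apply, ee_apply]
      by_cases h : k = k'
      · subst h
        simp only [mk_same, of_apply, Equiv.symm_apply_apply, mul_assoc]
      · simp [mk_ne _ h]
    | zero =>
      refine ⟨0, ?_⟩
      ext ⟨s, k, a, b⟩ ⟨t, k', a', b'⟩
      simp only [submatrix_apply, ee_apply]
      by_cases h : k = k'
      · subst h
        simp [mk_same]
      · simp [mk_ne _ h]
    | add z w _ _ hz hw =>
      obtain ⟨Y, rfl⟩ := hz
      obtain ⟨Y', rfl⟩ := hw
      refine ⟨Y + Y', ?_⟩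
      ext ⟨s, k, a, b⟩ ⟨t, k', a', b'⟩
      simp only [submatrix_apply, ee_apply, Matrix.add_apply]
      by_cases h : k = k'
      · subst h
        simp only [mk_same, Pi.add_apply, Matrix.add_apply, add_mul]
      · simp [mk_ne _ h]
    | smul c z _ hz =>
      obtain ⟨Y, rfl⟩ := hz
      refine ⟨c • Y, ?_⟩
      ext ⟨s, k, a, b⟩ ⟨t, k', a', b'⟩
      simp only [submatrix_apply, ee_apply, Matrix.smul_apply]
      by_cases h : k = k'
      · subst h
        simp only [mk_same, Pi.smul_apply, Matrix.smul_apply, smul_eq_mul, mul_assoc]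
      · simp [mk_ne _ h]
  · rintro ⟨Y, rfl⟩
    have : (mk (nn := fun k => q * nn k) ll Y).submatrix (ee q nn ll) (ee q nn ll) =
        ∑ s : Fin q, ∑ t : Fin q, (Matrix.single s t (1:ℂ)) ⊗ₖ
          (mk ll fun k => of fun a a' => Y k (finProdFinEquiv (s, a)) (finProdFinEquiv (t, a'))) := by
      ext ⟨s, k, a, b⟩ ⟨t, k', a', b'⟩
      simp only [submatrix_apply, ee_apply, Matrix.sum_apply, kroneckerMap_apply]
      rw [Finset.sum_eq_single s, Finset.sum_eq_single t]
      · by_cases h : k = k'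
        · subst h
          simp [mk_same]
        · simp [mk_ne _ h]
      · intro t' _ ht
        simp [Matrix.single_apply, ht]
      · simp
      · intro s' _ hs
        simp [Matrix.single_apply, hs]
      · simp
    rw [this]
    refine Submodule.sum_mem _ fun s _ => Submodule.sum_mem _ fun t _ => Submodule.subset_span ?_
    exact ⟨_, Set.mem_univ _, _, (mem_blockAlg _).2 ⟨_, rfl⟩, rfl⟩

lemma DpRel_tensor (q : ℕ) :
    DpRel 1 Set.univ (tensorSpan (Set.univ : Set (Mat (Fin q))) (blockAlg K nn ll)) =
      DpRel 1 Set.univ (blockAlg K (fun k => q * nn k) ll) := by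
  apply le_antisymm
  · refine DpRel_submatrix_le (ee q nn ll).symm _ _ fun X hX => ?_
    obtain ⟨Y, rfl⟩ := (mem_blockAlg _).1 hX
    exact (mem_tensor q _).2 ⟨Y, rfl⟩
  · refine DpRel_submatrix_le (ee q nn ll) _ _ fun X hX => ?_
    obtain ⟨Y, rfl⟩ := (mem_tensor q _).1 hX
    refine (mem_blockAlg _).2 ⟨Y, ?_⟩
    simp [Matrix.submatrix_submatrix]

lemma DpCb_block [Nonempty K] (hnn : ∀ k, 0 < nn k) (hll : ∀ k, 0 < ll k) :
    DpCb 1 (blockAlg K nn ll) = ((Real.log (∑ k, (ll k : ℝ) ^ 2) : ℝ) : EReal) := by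
  apply le_antisymm
  · refine iSup_le fun q => ?_
    rcases Nat.eq_zero_or_pos q with rfl | hq
    · refine iSup₂_le fun ρ hρ => ?_
      have := hρ.2.2
      simp [Matrix.trace] at this
    · have hq' : ∀ k, 0 < q * nn k := fun k => Nat.mul_pos hq (hnn k)
      rw [DpRel_tensor, DpRel_block hq' hll]
      rw [EReal.coe_le_coe_iff]
      refine Real.log_le_log (SS_pos hq' hll) ?_
      unfold SS
      refine Finset.sum_le_sum fun k _ => ?_
      rw [sq]
      exact mul_le_mul_of_nonneg_right (min_le_left _ _) (Nat.cast_nonneg _)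
  · set q := ∑ k, ll k with hqd
    have hle : ∀ k, ll k ≤ q := fun k =>
      Finset.single_le_sum (f := ll) (fun _ _ => Nat.zero_le _) (Finset.mem_univ k)
    have hq : 0 < q := (hll (Classical.arbitrary K)).trans_le (hle _)
    have hq' : ∀ k, 0 < q * nn k := fun k => Nat.mul_pos hq (hnn k)
    refine le_trans (le_of_eq ?_) (le_iSup _ q)
    rw [DpRel_tensor, DpRel_block hq' hll]
    congr 2
    unfold SS
    refine Finset.sum_congr rfl fun k _ => ?_
    have : ll k ≤ q * nn k := (hle k).trans (Nat.le_mul_of_pos_right _ (hnn k))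
    rw [min_eq_left (by exact_mod_cast this), sq]

end cb

/-- for `N = ⊕_k (M_{n_k} ⊗ ℂ1_{l_k}) ⊆ M_m`, `m = Σ_k n_k l_k`,
one has `-log λ(M_m : N) = D(M_m‖N) = log Σ_k min(l_k,n_k)·l_k` and
`D_cb(M_m‖N) = log Σ_k l_k²`. -/
theorem statement12 (K : Type) [Fintype K] [DecidableEq K] [Nonempty K]
    (nn ll : K → ℕ) (hnn : ∀ k, 0 < nn k) (hll : ∀ k, 0 < ll k)
    (E : Mat ((k : K) × (Fin (nn k) × Fin (ll k))) →ₗ[ℂ]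
          Mat ((k : K) × (Fin (nn k) × Fin (ll k))))
    (hE : IsCondExp (blockAlg K nn ll) E) :
    ((- Real.log (ppIndex E) : ℝ) : EReal) = DpRel 1 Set.univ (blockAlg K nn ll) ∧
    DpRel 1 Set.univ (blockAlg K nn ll)
        = ((Real.log (∑ k, (min (ll k) (nn k) : ℝ) * (ll k : ℝ)) : ℝ) : EReal) ∧
    DpCb 1 (blockAlg K nn ll)
        = ((Real.log (∑ k, (ll k : ℝ) ^ 2) : ℝ) : EReal) := by
  have h2 : DpRel 1 Set.univ (blockAlg K nn ll)
      = ((Real.log (∑ k, (min (ll k) (nn k) : ℝ) * (ll k : ℝ)) : ℝ) : EReal) :=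
    DpRel_block hnn hll
  refine ⟨?_, h2, DpCb_block hnn hll⟩
  rw [ppIndex_eq_s12 hnn hll E hE, Real.log_inv, neg_neg, h2]
  rfl

end GJL
end
end
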